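/- There exists a constant C = C(n) > 0, depending only on n, such that for every d ≥ 1 the probability that a random Bernoulli system f of degree d has a simultaneous zero lying on a coordinate hyperplane, i.e. Prob_d{ε : ∃ x ∈ Z(f) with x_1 ⋯ x_n = 0}, is at most C/d. -/

import Mathlib

/-!
Fix a coordinate `j`; by a union bound over `j` it suffices to show that the system has a zero
with `x_j = 0` with probability `O(1/d)`. Let `I_0 = (X_j)` and `I_{i+1} = I_i + (f_i)` for
`i < n - 1`.

*Dimension and degree.* `Good i I A` records that `I` has at most `i` generators and that
`ℂ[X]/√I` has at most `A · D^(n-i)` dimensions in degree `≤ D`. If `f` of degree `≤ d` lies in no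
minimal prime of `I`, it is a nonzerodivisor modulo `√I`, and telescoping the exact sequence of
multiplication by `f` gives `Good (i+1) (I + (f))` with `A` multiplied by `(1+d)^(n-i)`
(`hilb_step`, `Good.step`). By Krull's height theorem and `exists_transc`, every minimal prime of a
good ideal leaves `n - i` of the variables algebraically independent; comparing dimensions then
bounds the number of minimal primes by `A (n+1)^n`, and the number of zeros by `A` when `i = n`.
So the numbers of primes and of points that occur are polynomial in `d`.

*Non-degeneracy.* A prime modulo which some variable `X_t` is transcendental contains `f_i` with
probability at most `2^{-(d+1)}`: after conditioning on all coefficients except those of the powers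
of `X_t`, at most one choice of signs works (`pr_mem_prime_le`). Hence, outside an event of
probability `O(1/d)`, the ideal `I_{n-1}` has only polynomially many zeros.

*Anticoncentration at a point.* It remains to bound the probability that `f_{n-1}` vanishes at one
of these points `x`. For a nonzero coordinate `z` of `x`, consider the random sums
`∑ ± z^a`, `a ≤ d`. If `1, z, …, z^(r-1)` are linearly independent over `ℤ`, the sum splits into
about `d/r` blocks; symmetric laws and Cauchy–Schwarz reduce the probability of any value to the
return probability of a simple random walk on `ℤ^r`, so it is `O(d^(-r/2))` (`prb_powers_sq_le`).
If no nontrivial combination of the powers with coefficients in `{-1, 0, 1}` vanishes, the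
probability is at most `2^{-(d+1)}`. Both conditions fail only on a finite set `exc r` that does not
depend on `d`, since such a `z` is an algebraic integer of bounded degree with all conjugates of
modulus at most `2` (`exc_finite`). Taking `r = 2(n² + 1)` beats the polynomial number of points.

*Exceptional points.* The points all of whose coordinates lie in `exc r ∪ {0}` form a fixed finite
set. The origin is never a zero because constant terms are `±1`; any other such point is a zero of
one equation with probability `O(d^(-1/2))`, hence of the first two, which are independent, with
probability `O(1/d)` (`pr_two_le`). This last step is where `n ≥ 2` enters and is the source of the
rate `1/d`.
-/

open MeasureTheory Filter
open scoped Classical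

/-- The set of exponent vectors `J` with `J₁ + ⋯ + Jₙ ≤ d` (each coordinate is then `≤ d`). -/
abbrev Idx (n d : ℕ) := {J : Fin n → Fin (d + 1) // (∑ j, (J j : ℕ)) ≤ d}

/-- A sign choice `ε = (ε_{i,J})`, with `true ↦ 1` and `false ↦ -1`. -/
abbrev Signs (n d : ℕ) := Fin n → Idx n d → Bool

noncomputable def sgn (b : Bool) : ℂ := if b then 1 else -1

/-- The `i`-th Bernoulli polynomial of the system, evaluated at `x`. -/
noncomputable def fSys (n d : ℕ) (ε : Signs n d) (i : Fin n) (x : Fin n → ℂ) : ℂ :=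
  ∑ J : Idx n d, sgn (ε i J) * ∏ j, x j ^ (J.1 j : ℕ)

/-- The set of simultaneous zeros of the system. -/
def Zset (n d : ℕ) (ε : Signs n d) : Set (Fin n → ℂ) :=
  {x | ∀ i, fSys n d ε i x = 0}

/-- Uniform probability of an event on the finite space of sign choices. -/
noncomputable def Pd (n d : ℕ) (E : Set (Signs n d)) : ℝ :=
  (E.ncard : ℝ) / (Fintype.card (Signs n d) : ℝ)

/-! ### Convolution inequalities for symmetric laws -/

/-- The probability that the random signed sum `∑ ± v a`, with independent uniform signs, equals
`c`. -/
noncomputable def prb {ι V : Type*} [Fintype ι] [AddCommGroup V] [Module ℂ V]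
    (v : ι → V) (c : V) : ℝ :=
  (Finset.univ.filter (fun ε : ι → Bool => ∑ a, sgn (ε a) • v a = c)).card / 2 ^ Fintype.card ι

/-- The law of `± v` with a uniform sign, as an element of the group algebra `ℝ[V]`, where
multiplication is convolution of laws. -/
noncomputable def bern {V : Type*} [AddCommGroup V] (v : V) : AddMonoidAlgebra ℝ V :=
  AddMonoidAlgebra.single v (1 / 2) + AddMonoidAlgebra.single (-v) (1 / 2)

/-- An element of `ℝ[V]` is symmetric if it is invariant under `v ↦ -v`. -/
def IsSymm' {V : Type*} [AddCommGroup V] (F : AddMonoidAlgebra ℝ V) : Prop :=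
  AddMonoidAlgebra.mapDomainRingHom ℝ (negAddMonoidHom : V →+ V) F = F

section Conv
variable {V : Type*} [AddCommGroup V]

lemma coeff_bern_mul (v : V) (F : AddMonoidAlgebra ℝ V) (c : V) :
    (bern v * F).coeff c = 1 / 2 * F.coeff (-v + c) + 1 / 2 * F.coeff (v + c) := by
  simp [bern, add_mul, AddMonoidAlgebra.coeff_single_mul_apply]

lemma isSymm_coeff {F : AddMonoidAlgebra ℝ V} (h : IsSymm' F) (v : V) :
    F.coeff (-v) = F.coeff v := by
  conv_lhs => rw [← h]
  exact Finsupp.mapDomain_apply neg_injective F.coeff v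

lemma isSymm_bern (v : V) : IsSymm' (bern v) := by
  simp [IsSymm', bern, AddMonoidAlgebra.mapDomain_add, AddMonoidAlgebra.mapDomain_single, add_comm]

lemma IsSymm'.mul {F G : AddMonoidAlgebra ℝ V} (hF : IsSymm' F) (hG : IsSymm' G) :
    IsSymm' (F * G) := by
  unfold IsSymm' at *
  rw [map_mul, hF, hG]

lemma IsSymm'.prod {ι : Type*} (s : Finset ι) (F : ι → AddMonoidAlgebra ℝ V)
    (hF : ∀ i ∈ s, IsSymm' (F i)) : IsSymm' (∏ i ∈ s, F i) := by
  unfold IsSymm' at *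
  rw [map_prod]
  exact Finset.prod_congr rfl hF

lemma coeff_mul_self {F : AddMonoidAlgebra ℝ V} (hF : IsSymm' F) :
    (F * F).coeff 0 = ∑ v ∈ F.coeff.support, F.coeff v ^ 2 := by
  rw [AddMonoidAlgebra.coeff_mul_apply_left, Finsupp.sum]
  refine Finset.sum_congr rfl fun v _ => ?_
  rw [add_zero, isSymm_coeff hF, sq]

/-- Cauchy–Schwarz: for independent symmetric `X₁`, `Y₁` with independent copies `X₂`, `Y₂`,
`P(X₁ + Y₁ = c)² ≤ P(X₁ + X₂ = 0) P(Y₁ + Y₂ = 0)`. -/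
lemma coeff_mul_sq_le {F G : AddMonoidAlgebra ℝ V} (hF : IsSymm' F) (hG : IsSymm' G) (c : V) :
    (F * G).coeff c ^ 2 ≤ (F * F).coeff 0 * (G * G).coeff 0 := by
  rw [coeff_mul_self hF, coeff_mul_self hG, AddMonoidAlgebra.coeff_mul_apply_left, Finsupp.sum]
  refine (Finset.sum_mul_sq_le_sq_mul_sq _ _ _).trans ?_
  refine mul_le_mul_of_nonneg_left ?_ (Finset.sum_nonneg fun _ _ => sq_nonneg _)
  have hinj : Set.InjOn (fun v : V => -v + c) (F.coeff.support : Set V) := by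
    intro a _ b _ h
    simpa using h
  classical
  rw [← Finset.sum_image (f := fun w => G.coeff w ^ 2) hinj]
  rw [← Finset.sum_filter_of_ne (p := fun w => w ∈ G.coeff.support) (fun w _ hw => by
    rw [Finsupp.mem_support_iff]
    intro h
    simp [h] at hw)]
  exact Finset.sum_le_sum_of_subset_of_nonneg (fun w hw => (Finset.mem_filter.1 hw).2)
    fun _ _ _ => sq_nonneg _

lemma le_of_sq_le_sq_real {a b : ℝ} (hb : 0 ≤ b) (h : a ^ 2 ≤ b ^ 2) : a ≤ b :=
  (abs_le_of_sq_le_sq' h hb).2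

/-- The inductive step of `coeff_prod_le` in isolation: if the bound for `2 ^ t` factors is known, it
applies to the squares `ν b * ν b`. -/
lemma coeff_prod_half_le {δ : ℝ} (t : ℕ) (ih : ∀ ν : ℕ → AddMonoidAlgebra ℝ V,
    (∀ b, IsSymm' (ν b)) → (∀ b, (ν b ^ 2 ^ t).coeff 0 ≤ δ) →
    (∏ b ∈ Finset.range (2 ^ t), ν b).coeff 0 ≤ δ) (ν : ℕ → AddMonoidAlgebra ℝ V)
    (hs : ∀ b, IsSymm' (ν b)) (h : ∀ b, (ν b ^ 2 ^ (t + 1)).coeff 0 ≤ δ) :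
    ((∏ b ∈ Finset.range (2 ^ t), ν b) * ∏ b ∈ Finset.range (2 ^ t), ν b).coeff 0 ≤ δ := by
  rw [← Finset.prod_mul_distrib]
  refine ih (fun b => ν b * ν b) (fun b => (hs b).mul (hs b)) (fun b => ?_)
  rw [← sq, ← pow_mul, mul_comm, ← pow_succ]
  exact h b

/-- Doubling: split `2 ^ (t + 1)` factors into two halves and apply Cauchy–Schwarz, which bounds the
mass at any point `c`, not only at the origin. -/
lemma coeff_prod_double_le {δ : ℝ} (hδ : 0 ≤ δ) (t : ℕ) (ih : ∀ ν : ℕ → AddMonoidAlgebra ℝ V,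
    (∀ b, IsSymm' (ν b)) → (∀ b, (ν b ^ 2 ^ t).coeff 0 ≤ δ) →
    (∏ b ∈ Finset.range (2 ^ t), ν b).coeff 0 ≤ δ) (ν : ℕ → AddMonoidAlgebra ℝ V)
    (hs : ∀ b, IsSymm' (ν b)) (h : ∀ b, (ν b ^ 2 ^ (t + 1)).coeff 0 ≤ δ) (c : V) :
    (∏ b ∈ Finset.range (2 ^ (t + 1)), ν b).coeff c ≤ δ := by
  rw [pow_succ, mul_two, Finset.prod_range_add]
  have hs1 := IsSymm'.prod (Finset.range (2 ^ t)) ν fun i _ => hs i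
  have hs2 := IsSymm'.prod (Finset.range (2 ^ t)) (fun b => ν (2 ^ t + b)) fun i _ => hs _
  refine le_of_sq_le_sq_real hδ ?_
  refine (coeff_mul_sq_le hs1 hs2 c).trans ?_
  rw [sq δ]
  refine mul_le_mul (coeff_prod_half_le t ih ν hs h)
    (coeff_prod_half_le t ih _ (fun b => hs _) fun b => h _) ?_ hδ
  rw [coeff_mul_self hs2]
  positivity

/-- A Hölder-type inequality: the mass at `0` of a convolution of `2 ^ t` symmetric laws is at most
the largest of the masses at `0` of their `2 ^ t`-th convolution powers. -/
lemma coeff_prod_le {δ : ℝ} (hδ : 0 ≤ δ) (t : ℕ) : ∀ ν : ℕ → AddMonoidAlgebra ℝ V,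
    (∀ b, IsSymm' (ν b)) → (∀ b, (ν b ^ 2 ^ t).coeff 0 ≤ δ) →
    (∏ b ∈ Finset.range (2 ^ t), ν b).coeff 0 ≤ δ := by
  induction t with
  | zero => intro ν _ h; simpa using h 0
  | succ t ih => intro ν hs h; exact coeff_prod_double_le hδ t ih ν hs h 0

/-- Adding further independent signed summands does not increase the maximal point mass. -/
lemma coeff_prod_bern_mul_le {ι : Type*} {δ : ℝ} (s : Finset ι) (v : ι → V)
    (F : AddMonoidAlgebra ℝ V) (hF : ∀ c, F.coeff c ≤ δ) (c : V) :
    ((∏ a ∈ s, bern (v a)) * F).coeff c ≤ δ := by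
  induction s using Finset.induction_on generalizing c with
  | empty => simpa using hF c
  | insert a s ha ih =>
    rw [Finset.prod_insert ha, mul_assoc, coeff_bern_mul]
    linarith [ih (-v a + c), ih (v a + c)]

lemma bern_pow (v : V) (m : ℕ) : bern v ^ (2 * m) = ∑ k ∈ Finset.range (2 * m + 1),
    AddMonoidAlgebra.single ((2 * (k : ℤ) - 2 * m) • v) ((2 * m).choose k / 4 ^ m : ℝ) := by
  rw [bern, add_pow]
  refine Finset.sum_congr rfl fun k hk => ?_
  have hk' : k ≤ 2 * m := by simpa [Nat.lt_succ_iff] using hk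
  rw [AddMonoidAlgebra.single_pow, AddMonoidAlgebra.single_pow, AddMonoidAlgebra.single_mul_single,
    AddMonoidAlgebra.natCast_def, AddMonoidAlgebra.single_mul_single]
  congr 1
  · rw [add_zero, smul_neg, ← sub_eq_add_neg, ← natCast_zsmul, ← natCast_zsmul, ← sub_smul]
    congr 1
    push_cast [hk']
    ring
  · rw [← pow_add, Nat.add_sub_cancel' hk', pow_mul]
    rw [show ((1 : ℝ) / 2) ^ 2 = 4⁻¹ by norm_num, inv_pow, div_eq_mul_inv, mul_comm]

/-- For `ℤ`-independent `v`, the sum of `2 * m` independent copies of `∑ ± v i` returns to `0` exactly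
when each of the `r` coordinate walks does, whence the power of the central binomial probability. -/
lemma coeff_block {r : ℕ} (v : Fin r → V) (hv : LinearIndependent ℤ v) (m : ℕ) :
    ((∏ i, bern (v i)) ^ (2 * m)).coeff 0 = (m.centralBinom / 4 ^ m : ℝ) ^ r := by
  rw [← Finset.prod_pow]
  simp_rw [bern_pow]
  rw [Finset.prod_univ_sum]
  simp_rw [AddMonoidAlgebra.prod_single]
  rw [AddMonoidAlgebra.coeff_sum, Finsupp.finsetSum_apply,
    -- By linear independence only the term with all `k i = m` sits at the origin.
    Finset.sum_eq_single (fun _ => m)]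
  · simp [Nat.centralBinom, div_pow]
  · intro k _ hk
    rw [AddMonoidAlgebra.coeff_single, Finsupp.single_apply, if_neg]
    intro h
    have h1 := Fintype.linearIndependent_iff.1 hv _ h
    refine hk (funext fun i => ?_)
    have := h1 i
    omega
  · intro h
    refine absurd ?_ h
    simp [Fintype.mem_piFinset]
    omega

end Conv

/-! ### Concentration probabilities of random signed sums -/

section Prb
variable {V : Type*} [AddCommGroup V] [Module ℂ V]

/-- The law of the signed sum `∑ ± v a` is the convolution of the laws of `± v a`. -/
lemma coeff_prod_bern {ι : Type*} [Fintype ι] (v : ι → V) (c : V) :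
    (∏ a, bern (v a)).coeff c = prb v c := by
  have h1 : ∀ a, bern (v a) = ∑ b : Bool, AddMonoidAlgebra.single (sgn b • v a) (1 / 2 : ℝ) := by
    intro a
    simp [bern, sgn]
  simp_rw [h1]
  rw [Finset.prod_univ_sum]
  simp_rw [AddMonoidAlgebra.prod_single]
  rw [AddMonoidAlgebra.coeff_sum, Finsupp.finsetSum_apply]
  simp only [Fintype.piFinset_univ, AddMonoidAlgebra.coeff_single, Finsupp.single_apply]
  rw [← Finset.sum_filter, Finset.sum_const, prb]
  simp [div_eq_mul_inv]

/-- Conditioning: a uniform bound for the signed sum over a subfamily holds for the whole family. -/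
lemma prb_le_of_injective {ι κ : Type*} [Fintype ι] [Fintype κ] {δ : ℝ} (v : ι → V) (e : κ → ι)
    (he : Function.Injective e) (h : ∀ c, prb (fun k => v (e k)) c ≤ δ) (c : V) :
    prb v c ≤ δ := by
  rw [← coeff_prod_bern, ← Finset.prod_compl_mul_prod (Finset.univ.image e),
    Finset.prod_image he.injOn]
  refine coeff_prod_bern_mul_le _ _ _ (fun c => ?_) c
  rw [coeff_prod_bern]
  exact h c

/-- If no nontrivial combination with coefficients in `{-1, 0, 1}` vanishes, then distinct sign
vectors give distinct sums, so every value is attained at most once. -/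
lemma prb_le_of_dissociated {κ : Type*} [Fintype κ] (v : κ → V)
    (h : ∀ η : κ → ℤ, (∀ a, η a = -1 ∨ η a = 0 ∨ η a = 1) → ∑ a, η a • v a = 0 → η = 0) (c : V) :
    prb v c ≤ (1 / 2) ^ Fintype.card κ := by
  rw [prb, one_div, inv_pow, ← one_div]
  gcongr
  rw [← Nat.cast_one, Nat.cast_le, Finset.card_le_one]
  intro ε hε ε' hε'
  simp only [Finset.mem_filter, Finset.mem_univ, true_and] at hε hε'
  have h0 : ∑ a, (sgn (ε a) - sgn (ε' a)) • v a = 0 := by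
    simp_rw [sub_smul]
    rw [Finset.sum_sub_distrib, hε, hε', sub_self]
  have h2 := h (fun a => (if ε a then 1 else 0) - if ε' a then 1 else 0) ?_ ?_
  · funext a
    have := congrFun h2 a
    cases h3 : ε a <;> cases h4 : ε' a <;> simp_all
  · intro a
    cases ε a <;> cases ε' a <;> simp
  -- The difference of two signs is twice an element of `{-1, 0, 1}`.
  · have h3 : (2 : ℂ) • ∑ a, ((if ε a then 1 else 0) - if ε' a then 1 else 0 : ℤ) • v a = 0 := by
      rw [← h0, Finset.smul_sum]
      refine Finset.sum_congr rfl fun a _ => ?_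
      rw [← Int.cast_smul_eq_zsmul ℂ, smul_smul]
      congr 1
      cases ε a <;> cases ε' a <;> simp [sgn] <;> norm_num
    exact (smul_eq_zero.1 h3).resolve_left two_ne_zero

lemma centralBinom_sq_le (m : ℕ) : m.centralBinom ^ 2 * (2 * m + 1) ≤ 16 ^ m := by
  induction m with
  | zero => simp
  | succ m ih =>
    have h := Nat.succ_mul_centralBinom_succ m
    have h2 : (m + 1) ^ 2 * ((m + 1).centralBinom ^ 2 * (2 * (m + 1) + 1)) ≤
        (m + 1) ^ 2 * 16 ^ (m + 1) := by
      calc _ = ((m + 1) * (m + 1).centralBinom) ^ 2 * (2 * (m + 1) + 1) := by ring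
        _ = 4 * (2 * m + 1) * (2 * m + 3) * (m.centralBinom ^ 2 * (2 * m + 1)) := by
          rw [h]; ring
        _ ≤ (16 * (m + 1) ^ 2) * 16 ^ m := by
          refine Nat.mul_le_mul ?_ ih
          nlinarith
        _ = _ := by ring
    exact Nat.le_of_mul_le_mul_left h2 (by positivity)

/-- Anticoncentration for `2 ^ (t + 1)` blocks of `r` vectors each, every block being linearly
independent over `ℤ`. No independence between different blocks is required. -/
lemma prb_block_sq_le {r : ℕ} (t : ℕ) (v : ℕ → Fin r → V)
    (hv : ∀ b, LinearIndependent ℤ (v b)) (c : V) :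
    prb (fun p : Fin (2 ^ (t + 1)) × Fin r => v p.1 p.2) c ^ 2 ≤ (1 / 2 ^ (t + 1)) ^ r := by
  -- `δ` is the return probability of the simple walk on `ℤ ^ r` after `2 ^ (t + 1)` steps.
  set δ : ℝ := ((2 ^ t).centralBinom / 4 ^ (2 ^ t) : ℝ) ^ r with hδ
  have hδ0 : 0 ≤ δ := by positivity
  have h1 : prb (fun p : Fin (2 ^ (t + 1)) × Fin r => v p.1 p.2) c ≤ δ := by
    rw [← coeff_prod_bern, Fintype.prod_prod_type,
      ← Finset.prod_range (fun b => ∏ i, bern (v b i))]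
    refine coeff_prod_double_le hδ0 t (coeff_prod_le hδ0 t) _
      (fun b => IsSymm'.prod _ _ fun i _ => isSymm_bern _) (fun b => ?_) c
    rw [pow_succ', coeff_block _ (hv b)]
  have h0 : 0 ≤ prb (fun p : Fin (2 ^ (t + 1)) × Fin r => v p.1 p.2) c := by
    unfold prb; positivity
  calc _ ≤ δ ^ 2 := pow_le_pow_left₀ h0 h1 2
    _ = (((2 ^ t).centralBinom / 4 ^ (2 ^ t) : ℝ) ^ 2) ^ r := by rw [hδ, ← pow_mul, ← pow_mul, mul_comm]
    _ ≤ _ := by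
      refine pow_le_pow_left₀ (by positivity) ?_ r
      have := centralBinom_sq_le (2 ^ t)
      have h : ((2 ^ t).centralBinom : ℝ) ^ 2 * (2 * 2 ^ t + 1) ≤ 16 ^ 2 ^ t := by exact_mod_cast this
      rw [div_pow, ← pow_mul, mul_comm (2 ^ t) 2, pow_mul, div_le_div_iff₀ (by positivity) (by positivity)]
      norm_num
      rw [pow_succ 2 t]
      nlinarith [sq_nonneg ((2 ^ t).centralBinom : ℝ)]

end Prb

/-! ### The finite set of exceptional numbers -/

section NumberTheory
open Polynomial

/-- The nonzero integer polynomials all of whose coefficients lie in `{-1, 0, 1}`. -/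
def smallCoeff : Set ℤ[X] := {η | η ≠ 0 ∧ ∀ k, η.coeff k = -1 ∨ η.coeff k = 0 ∨ η.coeff k = 1}

/-- The complex numbers that are roots both of a nonzero integer polynomial of degree `< r` and of a
nonzero polynomial with coefficients in `{-1, 0, 1}` (of arbitrary degree). -/
def exc (r : ℕ) : Set ℂ := {z | (∃ p : ℤ[X], p ≠ 0 ∧ p.natDegree < r ∧ aeval z p = 0) ∧
  ∃ η ∈ smallCoeff, aeval z η = 0}

/-- Cauchy's root bound. -/
lemma norm_root_le {η : ℤ[X]} (hη : η ∈ smallCoeff) {w : ℂ} (hw : aeval w η = 0) : ‖w‖ ≤ 2 := by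
  obtain ⟨h0, hc⟩ := hη
  have hinj : Function.Injective (Int.castRingHom ℂ) := Int.cast_injective
  have hm0 : η.map (Int.castRingHom ℂ) ≠ 0 := by
    rwa [Polynomial.map_ne_zero_iff hinj]
  have hr : (η.map (Int.castRingHom ℂ)).IsRoot w := by
    rw [IsRoot.def, eval_map, ← hw, aeval_def]
    rfl
  have h1 := hr.norm_lt_cauchyBound hm0
  have h2 : (η.map (Int.castRingHom ℂ)).cauchyBound ≤ 2 := by
    unfold cauchyBound
    have hl : ‖(η.map (Int.castRingHom ℂ)).leadingCoeff‖₊ = 1 := by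
      rw [leadingCoeff_map_of_injective hinj]
      have h3 : η.leadingCoeff ≠ 0 := leadingCoeff_ne_zero.2 h0
      rcases hc η.natDegree with h | h | h
      · simp [leadingCoeff, h]
      · exact absurd h h3
      · simp [leadingCoeff, h]
    rw [hl, div_one]
    have : (Finset.range (η.map (Int.castRingHom ℂ)).natDegree).sup
        (fun x => ‖(η.map (Int.castRingHom ℂ)).coeff x‖₊) ≤ 1 := by
      refine Finset.sup_le fun k _ => ?_
      rw [coeff_map]
      rcases hc k with h | h | h <;> simp [h]
    calc _ ≤ (1 : NNReal) + 1 := by gcongr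
      _ = 2 := by norm_num
  exact h1.le.trans (by exact_mod_cast h2)

/-- An element of `exc r` is an algebraic integer of degree `< r` (the leading coefficient of the
`{-1, 0, 1}`-polynomial is a unit), and all its conjugates have modulus at most `2`; only finitely
many minimal polynomials have these properties. -/
lemma exc_finite (r : ℕ) : (exc r).Finite := by
  obtain ⟨N, hN⟩ : ∃ N : ℤ, ∀ g : ℤ[X], g.Monic → g.natDegree ≤ r →
      (∀ w : ℂ, aeval w g = 0 → ‖w‖ ≤ 2) → ∀ i, |g.coeff i| ≤ N := by
    refine ⟨⌊(max 2 1 ^ r * (r.choose (r / 2)) : ℝ)⌋, fun g hg hd hr i => ?_⟩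
    rw [Int.le_floor]
    have h1 := Polynomial.coeff_bdd_of_roots_le (p := g) (f := Int.castRingHom ℂ) (B := 2) (d := r) hg
      (IsAlgClosed.splits _) hd ?_ i
    · rw [coeff_map] at h1
      simpa using h1
    · intro z hz
      refine hr z ?_
      rw [mem_roots (Polynomial.map_monic_ne_zero hg), IsRoot.def, eval_map] at hz
      rw [aeval_def]
      exact hz
  refine (Polynomial.bUnion_roots_finite (algebraMap ℤ ℂ) r (Set.finite_Icc (-N) N)).subset ?_
  rintro z ⟨⟨p, hp0, hpr, hpz⟩, η, hη, hηz⟩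
  have hz_int : IsIntegral ℤ z := by
    obtain ⟨h0, hc⟩ := hη
    have h3 : η.leadingCoeff ≠ 0 := leadingCoeff_ne_zero.2 h0
    rcases hc η.natDegree with h | h | h
    · refine ⟨-η, ?_, ?_⟩
      · rw [Monic, leadingCoeff_neg, leadingCoeff, h]; rfl
      · rw [← aeval_def, map_neg, hηz, neg_zero]
    · exact absurd h h3
    · exact ⟨η, h, hηz⟩
  have hdeg : (minpoly ℤ z).natDegree ≤ p.natDegree :=
    natDegree_le_natDegree (minpoly.IsIntegrallyClosed.degree_le_of_ne_zero hp0 hpz)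
  have hmon := minpoly.monic hz_int
  have hdvd : minpoly ℤ z ∣ η := minpoly.isIntegrallyClosed_dvd hz_int hηz
  have hco := hN _ hmon (hdeg.trans hpr.le) (fun w hw => norm_root_le hη (by
    obtain ⟨q, hq⟩ := hdvd
    rw [hq, map_mul, hw, zero_mul]))
  simp only [Set.mem_iUnion]
  refine ⟨minpoly ℤ z, ⟨hdeg.trans hpr.le, fun i => abs_le.1 (hco i)⟩, ?_⟩
  simp only [Finset.mem_coe, Multiset.mem_toFinset]
  rw [mem_roots (Polynomial.map_monic_ne_zero hmon), IsRoot.def, eval_map, ← aeval_def]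
  exact minpoly.aeval ℤ z

end NumberTheory

/-! ### Random signed sums of powers -/

section Powers

/-- Exponential decay beats any prescribed power, with a constant uniform in `d`. -/
lemma half_pow_le (A : ℕ) : ∃ C : ℝ, 0 < C ∧ ∀ d : ℕ,
    (1 / 2 : ℝ) ^ (d + 1) ≤ C / ((d : ℝ) + 1) ^ A := by
  have h := tendsto_pow_const_mul_const_pow_of_abs_lt_one A (r := (1 / 2 : ℝ)) (by
    rw [abs_of_pos] <;> norm_num)
  obtain ⟨C, hC⟩ := h.bddAbove_range
  refine ⟨max C 1, by positivity, fun d => ?_⟩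
  rw [le_div_iff₀ (by positivity)]
  have := hC ⟨d + 1, rfl⟩
  push_cast at this
  rw [mul_comm]
  exact this.trans (le_max_left _ _)

lemma prb_le_one {ι V : Type*} [Fintype ι] [AddCommGroup V] [Module ℂ V]
    (v : ι → V) (c : V) : prb v c ≤ 1 := by
  rw [prb]
  refine div_le_one_of_le₀ ?_ (by positivity)
  have := Finset.card_filter_le (Finset.univ : Finset (ι → Bool))
    (fun ε : ι → Bool => ∑ a, sgn (ε a) • v a = c)
  rw [Finset.card_univ, Fintype.card_fun, Fintype.card_bool] at this
  exact_mod_cast this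

lemma prb_nonneg {ι V : Type*} [Fintype ι] [AddCommGroup V] [Module ℂ V]
    (v : ι → V) (c : V) : 0 ≤ prb v c := by
  unfold prb; positivity

/-- Anticoncentration of `∑ ± z ^ a`, `a ≤ d`, when `1, z, …, z ^ (r - 1)` are `ℤ`-independent. -/
lemma prb_powers_sq_le {r : ℕ} (hr : 0 < r) {z : ℂ} (hz : z ≠ 0)
    (hli : LinearIndependent ℤ (fun i : Fin r => z ^ (i : ℕ))) (d : ℕ) (c : ℂ) :
    prb (fun a : Fin (d + 1) => z ^ (a : ℕ)) c ^ 2 ≤ (2 * r / ((d : ℝ) + 1)) ^ r := by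
  -- With fewer than two blocks the right-hand side is at least `1`.
  by_cases hd : d + 1 < 2 * r
  · calc _ ≤ (1 : ℝ) := pow_le_one₀ (prb_nonneg _ _) (prb_le_one _ _)
      _ ≤ _ := by
        refine one_le_pow₀ ?_
        rw [one_le_div (by positivity)]
        exact_mod_cast hd.le
  push Not at hd
  set q := (d + 1) / r with hq
  have hq2 : 2 ≤ q := by rw [hq, Nat.le_div_iff_mul_le hr]; exact hd
  -- Use the largest power of two not exceeding the number `q` of available blocks; this costs a
  -- factor of at most `2`.
  obtain ⟨t, ht⟩ : ∃ t, Nat.log 2 q = t + 1 :=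
    Nat.exists_eq_succ_of_ne_zero (Nat.log_pos one_lt_two hq2).ne'
  have h1 : 2 ^ (t + 1) ≤ q := ht ▸ Nat.pow_log_le_self 2 (by omega)
  have h2 : q < 2 ^ (t + 2) := by
    have := Nat.lt_pow_succ_log_self one_lt_two q
    rwa [ht] at this
  have h3 : 2 ^ (t + 1) * r ≤ d + 1 := by
    rwa [hq, Nat.le_div_iff_mul_le hr] at h1
  have h4 : d + 1 < 2 ^ (t + 2) * r := by
    rwa [hq, Nat.div_lt_iff_lt_mul hr] at h2
  set δ : ℝ := (1 / 2 ^ (t + 1)) ^ r with hδ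
  have hδ0 : 0 ≤ δ := by positivity
  let e : Fin (2 ^ (t + 1)) × Fin r → Fin (d + 1) := fun p =>
    ⟨p.1 * r + p.2, by
      have h5 : (p.1 + 1 : ℕ) * r ≤ 2 ^ (t + 1) * r := Nat.mul_le_mul_right _ p.1.2
      have := p.2.2
      rw [add_mul] at h5
      omega⟩
  have he : Function.Injective e := by
    intro p p' hpp
    have h5 : (p.1 : ℕ) * r + p.2 = p'.1 * r + p'.2 := congrArg Fin.val hpp
    have h6 : (p.2 : ℕ) = p'.2 := by
      have := congrArg (· % r) h5
      simpa [Nat.mul_add_mod, Nat.mod_eq_of_lt p.2.2, Nat.mod_eq_of_lt p'.2.2] using this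
    have h7 : (p.1 : ℕ) = p'.1 := by
      rw [h6, Nat.add_right_cancel_iff] at h5
      exact Nat.eq_of_mul_eq_mul_right hr h5
    exact Prod.ext (Fin.ext h7) (Fin.ext h6)
  have hb : ∀ b : ℕ, LinearIndependent ℤ (fun i : Fin r => z ^ (b * r + (i : ℕ))) := by
    intro b
    rw [Fintype.linearIndependent_iff] at hli ⊢
    intro g hg
    refine hli g ?_
    have h5 : z ^ (b * r) * ∑ i, g i • z ^ (i : ℕ) = 0 := by
      rw [← hg, Finset.mul_sum]
      refine Finset.sum_congr rfl fun i _ => ?_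
      rw [pow_add, mul_smul_comm]
    exact (mul_eq_zero.1 h5).resolve_left (pow_ne_zero _ hz)
  have key : prb (fun a : Fin (d + 1) => z ^ (a : ℕ)) c ≤ √δ := by
    refine prb_le_of_injective _ e he (fun c => ?_) c
    refine Real.le_sqrt_of_sq_le ?_
    exact prb_block_sq_le t (fun b (i : Fin r) => z ^ (b * r + (i : ℕ))) hb c
  calc _ ≤ √δ ^ 2 := pow_le_pow_left₀ (prb_nonneg _ _) key 2
    _ = δ := Real.sq_sqrt hδ0
    _ ≤ _ := by
      refine pow_le_pow_left₀ (by positivity) ?_ r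
      rw [div_le_div_iff₀ (by positivity) (by positivity)]
      have : (d : ℝ) + 1 ≤ 2 ^ (t + 2) * r := by exact_mod_cast h4.le
      rw [pow_succ 2 (t + 1)] at this
      linarith

/-- The case `r = 1`, which holds for every nonzero `z`. -/
lemma prb_powers_sq_le_of_ne_zero {z : ℂ} (hz : z ≠ 0) (d : ℕ) (c : ℂ) :
    prb (fun a : Fin (d + 1) => z ^ (a : ℕ)) c ^ 2 ≤ 2 / ((d : ℝ) + 1) := by
  have := prb_powers_sq_le (r := 1) one_pos hz ?_ d c
  · simpa using this
  · rw [Fintype.linearIndependent_iff]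
    intro g hg i
    rw [Subsingleton.elim i 0]
    simpa using hg

/-- An integer relation between powers of `z`, rewritten as a polynomial with root `z`. -/
lemma exists_poly_of_sum {r : ℕ} (z : ℂ) (g : Fin r → ℤ) (hg : ∑ i, g i • z ^ (i : ℕ) = 0)
    (hg0 : g ≠ 0) : ∃ p : Polynomial ℤ, p ≠ 0 ∧ p.natDegree < r ∧ Polynomial.aeval z p = 0 ∧
      ∀ k, p.coeff k = 0 ∨ ∃ i, p.coeff k = g i := by
  have hc : ∀ k, (∑ i : Fin r, Polynomial.monomial (i : ℕ) (g i)).coeff k =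
      if h : k < r then g ⟨k, h⟩ else 0 := by
    intro k
    rw [Polynomial.finsetSum_coeff]
    simp_rw [Polynomial.coeff_monomial]
    split_ifs with h
    · rw [Finset.sum_eq_single ⟨k, h⟩]
      · simp
      · intro b _ hb
        rw [if_neg]
        exact fun h' => hb (Fin.ext h')
      · simp
    · refine Finset.sum_eq_zero fun i _ => if_neg ?_
      have := i.2
      omega
  obtain ⟨i, hi⟩ := Function.ne_iff.1 hg0
  have hne : (∑ i : Fin r, Polynomial.monomial (i : ℕ) (g i)) ≠ 0 := by
    intro h
    have := hc i
    rw [h] at this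
    simp at this
    exact hi this.symm
  refine ⟨∑ i : Fin r, Polynomial.monomial (i : ℕ) (g i), hne, ?_, ?_, ?_⟩
  · rw [Polynomial.natDegree_lt_iff_degree_lt hne, Polynomial.degree_lt_iff_coeff_zero]
    intro m hm
    rw [hc, dif_neg (by omega)]
  · simp only [map_sum, Polynomial.aeval_monomial]
    rw [← hg]
    simp
  · intro k
    rw [hc]
    split_ifs with h
    · exact Or.inr ⟨_, rfl⟩
    · exact Or.inl rfl

/-- Outside the finite set `exc (2 * A)`, the signed sums of powers of `z ≠ 0` have point masses of
order `d ^ (-A)`. -/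
lemma prb_powers_le (A : ℕ) (hA : 0 < A) : ∃ C : ℝ, 0 < C ∧ ∀ z : ℂ, z ≠ 0 → z ∉ exc (2 * A) →
    ∀ (d : ℕ) (c : ℂ), prb (fun a : Fin (d + 1) => z ^ (a : ℕ)) c ≤ C / ((d : ℝ) + 1) ^ A := by
  obtain ⟨C, hC, hC'⟩ := half_pow_le A
  refine ⟨max C ((4 * A) ^ A), by positivity, fun z hz hze d c => ?_⟩
  -- Squaring loses half of the exponent, which is why `2 * A` powers are used.
  by_cases hli : LinearIndependent ℤ (fun i : Fin (2 * A) => z ^ (i : ℕ))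
  · have h := prb_powers_sq_le (by omega) hz hli d c
    rw [mul_comm 2 A, pow_mul] at h
    have h2 := (pow_le_pow_iff_left₀ (prb_nonneg _ _) (by positivity) two_ne_zero).1 h
    refine h2.trans ?_
    rw [div_pow]
    gcongr
    refine le_trans (le_of_eq ?_) (le_max_right _ _)
    push_cast
    ring
  · rw [Fintype.linearIndependent_iff] at hli
    push Not at hli
    obtain ⟨g, hg, i, hi⟩ := hli
    obtain ⟨p, hp0, hpd, hpz, -⟩ := exists_poly_of_sum z g hg (fun h => hi (by rw [h]; rfl))
    have h := prb_le_of_dissociated (fun a : Fin (d + 1) => z ^ (a : ℕ)) ?_ c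
    · rw [Fintype.card_fin] at h
      refine (h.trans (hC' d)).trans ?_
      gcongr
      exact le_max_left _ _
    · intro η hη hs
      by_contra h0
      obtain ⟨q, hq0, -, hqz, hqc⟩ := exists_poly_of_sum z η hs h0
      refine hze ⟨⟨p, hp0, hpd, hpz⟩, q, ⟨hq0, fun k => ?_⟩, hqz⟩
      rcases hqc k with h | ⟨i, h⟩
      · exact Or.inr (Or.inl h)
      · rw [h]; exact hη i

end Powers

/-! ### Hilbert functions and counting primes -/

section Hilbert
open MvPolynomial Module

variable {n : ℕ}

/-- The classes modulo `J` of the polynomials of total degree at most `D`. -/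
noncomputable def piece (J : Ideal (MvPolynomial (Fin n) ℂ)) (D : ℕ) :
    Submodule ℂ (MvPolynomial (Fin n) ℂ ⧸ J) :=
  (restrictTotalDegree (Fin n) ℂ D).map (Ideal.Quotient.mkₐ ℂ J).toLinearMap

/-- The affine Hilbert function of `J`. -/
noncomputable def hilb (J : Ideal (MvPolynomial (Fin n) ℂ)) (D : ℕ) : ℕ :=
  finrank ℂ (piece J D)

instance (J : Ideal (MvPolynomial (Fin n) ℂ)) (D : ℕ) : Module.Finite ℂ (piece J D) := by
  unfold piece; infer_instance

lemma piece_mono (J : Ideal (MvPolynomial (Fin n) ℂ)) {D D' : ℕ} (h : D ≤ D') :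
    piece J D ≤ piece J D' := by
  refine Submodule.map_mono fun p hp => ?_
  rw [mem_restrictTotalDegree] at hp ⊢
  exact hp.trans h

lemma hilb_mono (J : Ideal (MvPolynomial (Fin n) ℂ)) {D D' : ℕ} (h : D ≤ D') :
    hilb J D ≤ hilb J D' :=
  Submodule.finrank_mono (piece_mono J h)

/-- If `f` is a nonzerodivisor modulo `J`, multiplication by `f` embeds the degree `D` piece of
`ℂ[X]/J` into the kernel of the projection of the degree `D + d` piece to `ℂ[X]/J'`. -/
lemma hilb_add_le {J J' : Ideal (MvPolynomial (Fin n) ℂ)} (hJ : J ≤ J')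
    {f : MvPolynomial (Fin n) ℂ} (hf : f ∈ J') {d : ℕ} (hd : f.totalDegree ≤ d)
    (hreg : ∀ g, f * g ∈ J → g ∈ J) (D : ℕ) :
    hilb J' (D + d) + hilb J D ≤ hilb J (D + d) := by
  set p : (MvPolynomial (Fin n) ℂ ⧸ J) →ₗ[ℂ] (MvPolynomial (Fin n) ℂ ⧸ J') :=
    (Ideal.Quotient.factorₐ ℂ hJ).toLinearMap with hp
  have h1 := LinearMap.finrank_range_add_finrank_ker (p.domRestrict (piece J (D + d)))
  rw [LinearMap.range_domRestrict, LinearMap.ker_domRestrict,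
    ← Submodule.finrank_map_subtype_eq (piece J (D + d)), Submodule.map_comap_subtype] at h1
  have h2 : (piece J (D + d)).map p = piece J' (D + d) := by
    unfold piece
    rw [← Submodule.map_comp]
    rfl
  rw [h2] at h1
  unfold hilb
  rw [← h1]
  refine Nat.add_le_add_left ?_ _
  have hinj : Function.Injective (LinearMap.mulLeft ℂ (Ideal.Quotient.mk J f)) := by
    rw [injective_iff_map_eq_zero]
    intro a
    obtain ⟨g, rfl⟩ := Ideal.Quotient.mk_surjective a
    rw [LinearMap.mulLeft_apply, ← map_mul, Ideal.Quotient.eq_zero_iff_mem,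
      Ideal.Quotient.eq_zero_iff_mem]
    exact hreg g
  rw [(Submodule.equivMapOfInjective _ hinj (piece J D)).finrank_eq]
  have : Module.Finite ℂ ↥(piece J (D + d) ⊓ LinearMap.ker p) :=
    Submodule.finiteDimensional_of_le inf_le_left
  refine Submodule.finrank_mono ?_
  rintro _ ⟨_, ⟨g, hg, rfl⟩, rfl⟩
  refine ⟨⟨f * g, ?_, by simp⟩, ?_⟩
  · simp only [SetLike.mem_coe, mem_restrictTotalDegree] at hg ⊢
    exact (totalDegree_mul f g).trans (by omega)
  · have : p (Ideal.Quotient.mk J f * Ideal.Quotient.mk J g) = Ideal.Quotient.mk J' (f * g) := by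
      rw [← map_mul]; rfl
    simp only [LinearMap.ker, Submodule.mem_comap, LinearMap.mulLeft_apply,
      AlgHom.toLinearMap_apply, Ideal.Quotient.mkₐ_eq_mk, Submodule.mem_bot, SetLike.mem_coe]
    rw [this, Ideal.Quotient.eq_zero_iff_mem]
    exact J'.mul_mem_right _ hf

/-- Cutting by a nonzerodivisor lowers the growth exponent of the Hilbert function by one. -/
lemma hilb_step {J J' : Ideal (MvPolynomial (Fin n) ℂ)} (hJ : J ≤ J')
    {f : MvPolynomial (Fin n) ℂ} (hf : f ∈ J') {d : ℕ} (hd : f.totalDegree ≤ d)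
    (hreg : ∀ g, f * g ∈ J → g ∈ J) {A e : ℕ} (hA : ∀ D, 1 ≤ D → hilb J D ≤ A * D ^ (e + 1))
    (D : ℕ) (hD : 1 ≤ D) : hilb J' D ≤ A * (1 + d) ^ (e + 1) * D ^ e := by
  -- Telescoping `hilb_add_le` along `D, D + d, D + 2 * d, …`; below it is used with `k = D`.
  have h1 : ∀ k : ℕ, k * hilb J' D ≤ hilb J (D + k * d) := by
    intro k
    induction k with
    | zero => simp
    | succ k ih =>
      have h2 := hilb_add_le hJ hf hd hreg (D + k * d)
      have h3 : hilb J' D ≤ hilb J' (D + k * d + d) := hilb_mono _ (by omega)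
      rw [add_mul, one_mul, add_mul, one_mul, ← add_assoc]
      omega
  have h2 := (h1 D).trans (hA _ (by omega))
  have h3 : D * hilb J' D ≤ D * (A * (1 + d) ^ (e + 1) * D ^ e) := by
    refine h2.trans (le_of_eq ?_)
    rw [show D + D * d = D * (1 + d) by ring, mul_pow]
    ring
  exact Nat.le_of_mul_le_mul_left h3 hD

lemma hilb_le (J : Ideal (MvPolynomial (Fin n) ℂ)) (D : ℕ) : hilb J D ≤ (D + 1) ^ n := by
  refine (Submodule.finrank_map_le _ _).trans ?_
  refine (Submodule.finrank_mono (restrictTotalDegree_le_restrictDegree (σ := Fin n) (R := ℂ) D)).trans ?_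
  rw [restrictDegree, finrank_eq_nat_card_basis (basisRestrictSupport ℂ _)]
  have : Nat.card (Fin n → Fin (D + 1)) = (D + 1) ^ n := by simp
  rw [← this]
  refine Nat.card_le_card_of_injective
    (fun (s : {s : Fin n →₀ ℕ | ∀ i, s i ≤ D}) i => (⟨s.1 i, Nat.lt_succ_of_le (s.2 i)⟩ : Fin (D + 1))) ?_
  intro s t h
  ext i
  exact congrArg Fin.val (congrFun h i)

/-- The exponent vectors of monomials in the variables of `T` with all exponents at most `M`. -/
def box (T : Finset (Fin n)) (M : ℕ) : Set (Fin n →₀ ℕ) := {s | s.support ⊆ T ∧ ∀ i, s i ≤ M}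

lemma box_finite (T : Finset (Fin n)) (M : ℕ) : (box T M).Finite := by
  refine Set.Finite.of_injOn (f := fun s : Fin n →₀ ℕ => (s : Fin n → ℕ))
    (t := Set.pi Set.univ fun _ => Set.Iic M) ?_ ?_ (Set.Finite.pi fun _ => Set.finite_Iic M)
  · intro s hs i _
    exact hs.2 i
  · intro s _ t _ h
    exact DFunLike.coe_injective h

instance (T : Finset (Fin n)) (M : ℕ) : Finite (box T M) := box_finite T M

instance (T : Finset (Fin n)) (M : ℕ) : Module.Finite ℂ (restrictSupport ℂ (box T M)) :=
  Module.Finite.of_basis (basisRestrictSupport ℂ _)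

lemma le_finrank_box (T : Finset (Fin n)) (M : ℕ) :
    (M + 1) ^ T.card ≤ finrank ℂ (restrictSupport ℂ (box T M)) := by
  rw [finrank_eq_nat_card_basis (basisRestrictSupport ℂ _)]
  have : Nat.card (T → Fin (M + 1)) = (M + 1) ^ T.card := by simp
  rw [← this]
  refine Nat.card_le_card_of_injective
    (fun g : T → Fin (M + 1) => (⟨Finsupp.onFinset T (fun i => if h : i ∈ T then (g ⟨i, h⟩ : ℕ) else 0)
      (fun i hi => by by_contra h; simp [h] at hi), ?_, ?_⟩ : box T M)) ?_
  · exact Finsupp.support_onFinset_subset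
  · intro i
    simp only [Finsupp.onFinset_apply]
    split_ifs
    · exact Nat.lt_succ_iff.1 (g _).2
    · omega
  · intro g g' h
    funext i
    have := DFunLike.congr_fun (congrArg Subtype.val h) (i : Fin n)
    simp only [Finsupp.onFinset_apply, i.2, dif_pos] at this
    exact Fin.ext this

lemma mem_box_totalDegree {T : Finset (Fin n)} {M : ℕ} {p : MvPolynomial (Fin n) ℂ}
    (hp : p ∈ restrictSupport ℂ (box T M)) : p.totalDegree ≤ T.card * M := by
  rw [totalDegree]
  refine Finset.sup_le fun s hs => ?_
  have h := hp hs
  rw [Finsupp.sum]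
  refine (Finset.sum_le_card_nsmul _ _ M fun i _ => h.2 i).trans ?_
  rw [smul_eq_mul]
  exact Nat.mul_le_mul_right _ (Finset.card_le_card h.1)

lemma mem_box_supported {T : Finset (Fin n)} {M : ℕ} {p : MvPolynomial (Fin n) ℂ}
    (hp : p ∈ restrictSupport ℂ (box T M)) : p ∈ supported ℂ (T : Set (Fin n)) := by
  rw [mem_supported]
  intro i hi
  rw [Finset.mem_coe, mem_vars_iff_mem_support] at hi
  obtain ⟨s, hs, hi⟩ := hi
  exact (hp hs).1 hi

/-- Lower bound for the Hilbert function: each of the pairwise incomparable primes `q l ⊇ J` leaving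
`e` variables independent contributes a full box of monomials, separated from the other primes by a
fixed multiplier that lies in all of them but not in `q l`. -/
lemma card_mul_le_hilb {κ : Type*} [Fintype κ] (J : Ideal (MvPolynomial (Fin n) ℂ))
    (q : κ → Ideal (MvPolynomial (Fin n) ℂ)) (hq : ∀ l, (q l).IsPrime) (hJ : ∀ l, J ≤ q l)
    (hinc : ∀ l m, q m ≤ q l → m = l) (e : ℕ) (T : κ → Finset (Fin n)) (hT : ∀ l, (T l).card = e)
    (hTq : ∀ l, ∀ p ∈ supported ℂ (T l : Set (Fin n)), p ∈ q l → p = 0) :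
    ∃ c, ∀ M, Fintype.card κ * (M + 1) ^ e ≤ hilb J (e * M + c) := by
  -- Prime avoidance in its easy direction: a product of elements of the other primes.
  have hu : ∀ l, ∃ u, (∀ m, m ≠ l → u ∈ q m) ∧ u ∉ q l := by
    intro l
    have h1 : ∀ m, ∃ v, m ≠ l → v ∈ q m ∧ v ∉ q l := by
      intro m
      by_cases hm : m = l
      · exact ⟨0, fun h => absurd hm h⟩
      · obtain ⟨v, hv⟩ := SetLike.not_le_iff_exists.1 (fun h => hm (hinc l m h))
        exact ⟨v, fun _ => hv⟩
    choose v hv using h1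
    refine ⟨∏ m ∈ Finset.univ.erase l, v m, fun m hm => ?_, fun h => ?_⟩
    · exact Ideal.mem_of_dvd _ (Finset.dvd_prod_of_mem v (Finset.mem_erase.2 ⟨hm, Finset.mem_univ _⟩))
        (hv m hm).1
    · obtain ⟨m, hm, hm'⟩ := ((hq l).prod_mem_iff).1 h
      exact (hv m (Finset.ne_of_mem_erase hm)).2 hm'
  choose u hu hul using hu
  refine ⟨Finset.univ.sup fun l => (u l).totalDegree, fun M => ?_⟩
  set c := Finset.univ.sup fun l => (u l).totalDegree
  let Ψ : (∀ l, restrictSupport ℂ (box (T l) M)) →ₗ[ℂ] MvPolynomial (Fin n) ℂ :=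
    ∑ l, (LinearMap.mulLeft ℂ (u l) ∘ₗ (restrictSupport ℂ (box (T l) M)).subtype ∘ₗ
      LinearMap.proj l)
  have hΨ : ∀ p, Ψ p = ∑ l, u l * (p l : MvPolynomial (Fin n) ℂ) := by
    intro p
    simp only [Ψ, LinearMap.sum_apply, LinearMap.comp_apply, LinearMap.proj_apply,
      Submodule.subtype_apply, LinearMap.mulLeft_apply]
  let Φ : (∀ l, restrictSupport ℂ (box (T l) M)) →ₗ[ℂ] piece J (e * M + c) :=
    LinearMap.codRestrict _ ((Ideal.Quotient.mkₐ ℂ J).toLinearMap ∘ₗ Ψ) (by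
      intro p
      refine Submodule.mem_map_of_mem ?_
      rw [mem_restrictTotalDegree, hΨ]
      refine (totalDegree_finsetSum _ _).trans (Finset.sup_le fun l _ => ?_)
      refine (totalDegree_mul _ _).trans ?_
      have h1 := mem_box_totalDegree (p l).2
      rw [hT l] at h1
      have h2 : (u l).totalDegree ≤ c := Finset.le_sup (f := fun l => (u l).totalDegree) (Finset.mem_univ l)
      omega)
  have hΦ : Function.Injective Φ := by
    rw [injective_iff_map_eq_zero]
    intro p hp
    have h0 : Ideal.Quotient.mk J (∑ l, u l * (p l : MvPolynomial (Fin n) ℂ)) = 0 := by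
      have h5 : (Φ p : MvPolynomial (Fin n) ℂ ⧸ J) = 0 := by rw [hp]; rfl
      change Ideal.Quotient.mk J (Ψ p) = 0 at h5
      rwa [hΨ] at h5
    rw [Ideal.Quotient.eq_zero_iff_mem] at h0
    funext k
    have h1 := hJ k h0
    rw [← Finset.add_sum_erase _ _ (Finset.mem_univ k)] at h1
    have h2 : ∑ l ∈ Finset.univ.erase k, u l * (p l : MvPolynomial (Fin n) ℂ) ∈ q k :=
      Ideal.sum_mem _ fun l hl => Ideal.mul_mem_right _ _ (hu l k (Finset.ne_of_mem_erase hl).symm)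
    have h3 := (Ideal.add_mem_iff_left _ h2).1 h1
    have h4 := ((hq k).mem_or_mem h3).resolve_left (hul k)
    exact Subtype.ext (hTq k _ (mem_box_supported (p k).2) h4)
  refine le_trans ?_ (LinearMap.finrank_le_finrank_of_injective hΦ)
  rw [Module.finrank_pi_fintype, ← smul_eq_mul, ← Finset.card_univ]
  refine Finset.card_nsmul_le_sum _ _ _ fun l _ => ?_
  rw [← hT l]
  exact le_finrank_box _ _

/-- Comparison of the lower bound `card_mul_le_hilb` with an upper bound of the same growth `D ^ e`
bounds the number of primes. -/
lemma card_le_of_hilb {κ : Type*} [Fintype κ] (J : Ideal (MvPolynomial (Fin n) ℂ))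
    (q : κ → Ideal (MvPolynomial (Fin n) ℂ)) (hq : ∀ l, (q l).IsPrime) (hJ : ∀ l, J ≤ q l)
    (hinc : ∀ l m, q m ≤ q l → m = l) (e : ℕ) (T : κ → Finset (Fin n)) (hT : ∀ l, (T l).card = e)
    (hTq : ∀ l, ∀ p ∈ supported ℂ (T l : Set (Fin n)), p ∈ q l → p = 0)
    {A : ℕ} (hA : ∀ D, 1 ≤ D → hilb J D ≤ A * D ^ e) :
    Fintype.card κ ≤ A * (e + 1) ^ e := by
  obtain ⟨c, hc⟩ := card_mul_le_hilb J q hq hJ hinc e T hT hTq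
  -- Taking `M = c` absorbs the additive constant into the factor `(e + 1) ^ e`.
  have h1 : Fintype.card κ * (c + 1) ^ e ≤ A * (e + 1) ^ e * (c + 1) ^ e := by
    refine (hc c).trans ((hilb_mono J (show e * c + c ≤ (e + 1) * (c + 1) by nlinarith)).trans
      ((hA _ (by nlinarith)).trans (le_of_eq ?_)))
    rw [mul_pow, mul_assoc]
  exact Nat.le_of_mul_le_mul_right h1 (by positivity)

end Hilbert

/-! ### Algebraically independent variables modulo a prime -/

section Transcendence
open MvPolynomial

/-- The height does not drop under extension to a polynomial ring in one more variable, because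
`A → A[X]` is flat and so satisfies going down. -/
lemma height_le_of_comap_C {A : Type*} [CommRing A] [IsNoetherianRing A]
    (p : Ideal A) [p.IsPrime] (P : Ideal (Polynomial A)) [P.IsPrime] (h : P.comap Polynomial.C = p) :
    p.height ≤ P.height := by
  have : P.LiesOver p := ⟨h.symm⟩
  rw [Ideal.height_eq_height_add_of_liesOver_of_hasGoingDown p P]
  exact le_self_add

lemma coeff_finSuccEquiv_mem_supported {k : Type*} [Field k] {s : ℕ}
    {T : Set (Fin (s + 1))} {T' : Set (Fin s)} (hT : ∀ j : Fin s, j.succ ∈ T → j ∈ T')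
    {f : MvPolynomial (Fin (s + 1)) k} (hf : f ∈ supported k T) (i : ℕ) :
    (finSuccEquiv k s f).coeff i ∈ supported k T' := by
  rw [mem_supported] at hf ⊢
  intro j hj
  rw [Finset.mem_coe, mem_vars_iff_mem_support] at hj
  obtain ⟨m, hm, hj⟩ := hj
  refine hT j (hf ?_)
  rw [Finset.mem_coe, mem_vars_iff_mem_support]
  refine ⟨m.cons i, ?_, ?_⟩
  · rw [mem_support_iff, ← finSuccEquiv_coeff_coeff]
    exact mem_support_iff.1 hm
  · rw [Finsupp.mem_support_iff] at hj ⊢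
    rwa [Finsupp.cons_succ]

lemma coeff_finSuccEquiv_eq_zero {k : Type*} [Field k] {s : ℕ}
    {T : Set (Fin (s + 1))} (hT : 0 ∉ T)
    {f : MvPolynomial (Fin (s + 1)) k} (hf : f ∈ supported k T) {i : ℕ} (hi : i ≠ 0) :
    (finSuccEquiv k s f).coeff i = 0 := by
  rw [mem_supported] at hf
  ext m
  rw [finSuccEquiv_coeff_coeff, coeff_zero]
  by_contra h
  refine hT (hf ?_)
  rw [Finset.mem_coe, mem_vars_iff_mem_support]
  refine ⟨m.cons i, mem_support_iff.2 h, ?_⟩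
  rwa [Finsupp.mem_support_iff, Finsupp.cons_zero]

/-- A prime `q` of height `h` in `s` variables leaves at least `s - h` of the variables algebraically
independent. By induction on `s`, with `p` the contraction of `q` to one variable fewer: either `q`
is extended from `p` and the new variable is added to `T`, or the height increases by one. -/
lemma exists_transc {k : Type*} [Field k] (s : ℕ) : ∀ (q : Ideal (MvPolynomial (Fin s) k)),
    q.IsPrime → ∃ T : Finset (Fin s), (s : ℕ∞) ≤ T.card + q.height ∧
      ∀ p ∈ supported k (T : Set (Fin s)), p ∈ q → p = 0 := by
  induction s with
  | zero =>
    intro q hq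
    refine ⟨∅, by simp, fun p hp hpq => ?_⟩
    by_contra h
    refine hq.ne_top (Ideal.eq_top_of_isUnit_mem q hpq ?_)
    rw [eq_C_of_isEmpty p] at h ⊢
    refine IsUnit.map C (isUnit_iff_ne_zero.2 fun h' => h ?_)
    rw [h', C_0]
  | succ s ih =>
    intro q hq
    set e : MvPolynomial (Fin (s + 1)) k ≃+* Polynomial (MvPolynomial (Fin s) k) :=
      (finSuccEquiv k s).toRingEquiv with he
    set P := q.map e with hP
    have hPp : P.IsPrime := Ideal.map_isPrime_of_equiv e
    have hPh : P.height = q.height := RingEquiv.height_map e q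
    have hmem : ∀ f ∈ q, finSuccEquiv k s f ∈ P := fun f hf => Ideal.mem_map_of_mem e hf
    set p := P.comap Polynomial.C with hp
    have hpp : p.IsPrime := Ideal.comap_isPrime _ _
    obtain ⟨T, hT, hTp⟩ := ih p hpp
    have hmapp : (p.map Polynomial.C).IsPrime := Ideal.isPrime_map_C_of_isPrime
    by_cases hc : p.map Polynomial.C = P
    · have hh : p.height ≤ P.height := height_le_of_comap_C p P rfl
      refine ⟨insert 0 (T.map (Fin.succEmb s)), ?_, fun f hf hfq => ?_⟩
      · rw [Finset.card_insert_of_notMem (by simp [Fin.succ_ne_zero]), Finset.card_map, ← hPh]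
        push_cast
        calc (s : ℕ∞) + 1 ≤ T.card + p.height + 1 := by gcongr
          _ ≤ T.card + P.height + 1 := by gcongr
          _ = _ := by ring
      · have h1 := hmem f hfq
        rw [← hc, Ideal.mem_map_C_iff] at h1
        rw [← (finSuccEquiv k s).map_eq_zero_iff]
        ext1 i
        rw [Polynomial.coeff_zero]
        refine hTp _ (coeff_finSuccEquiv_mem_supported (fun j hj => ?_) hf i) (h1 i)
        simpa [Fin.succ_ne_zero] using hj
    · have hle : p.map Polynomial.C ≤ P := Ideal.map_comap_le
      have h1 := Ideal.height_add_one_le_of_lt_of_isPrime (lt_of_le_of_ne hle hc)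
      have hh : p.height ≤ (p.map Polynomial.C).height := by
        refine height_le_of_comap_C p _ ?_
        ext a
        rw [Ideal.mem_comap, Ideal.mem_map_C_iff]
        refine ⟨fun h => by simpa using h 0, fun h i => ?_⟩
        rw [Polynomial.coeff_C]
        split_ifs
        · exact h
        · exact p.zero_mem
      refine ⟨T.map (Fin.succEmb s), ?_, fun f hf hfq => ?_⟩
      · rw [Finset.card_map, ← hPh]
        push_cast
        calc (s : ℕ∞) + 1 ≤ T.card + p.height + 1 := by gcongr
          _ = T.card + (p.height + 1) := by ring
          _ ≤ T.card + ((p.map Polynomial.C).height + 1) := by gcongr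
          _ ≤ _ := by gcongr
      · have h2 := hmem f hfq
        have h3 : finSuccEquiv k s f = Polynomial.C ((finSuccEquiv k s f).coeff 0) := by
          ext1 i
          rw [Polynomial.coeff_C]
          split_ifs with hi
          · rw [hi]
          · refine coeff_finSuccEquiv_eq_zero (T := ((T.map (Fin.succEmb s) : Finset (Fin (s + 1))) :
              Set (Fin (s + 1)))) ?_ hf hi
            simp [Fin.succ_ne_zero]
        rw [h3] at h2
        have h5 : (finSuccEquiv k s f).coeff 0 ∈ supported k (T : Set (Fin s)) := by
          refine coeff_finSuccEquiv_mem_supported (fun j hj => ?_) hf 0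
          simpa using hj
        have h4 := hTp _ h5 (Ideal.mem_comap.2 h2)
        rw [h4, map_zero] at h3
        exact (finSuccEquiv k s).map_eq_zero_iff.1 h3

end Transcendence

/-! ### Ideals of controlled dimension and degree -/

section Good
open MvPolynomial

variable {n : ℕ}

/-- `I` is generated by at most `i` elements, and the Hilbert function of its radical is at most
`A * D ^ (n - i)`: the zero locus has dimension `n - i` and its degree is controlled by `A`. -/
structure Good (i : ℕ) (I : Ideal (MvPolynomial (Fin n) ℂ)) (A : ℕ) : Prop where
  gen : ∃ s : Finset (MvPolynomial (Fin n) ℂ), s.card ≤ i ∧ I = Ideal.span s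
  hil : ∀ D, 1 ≤ D → hilb I.radical D ≤ A * D ^ (n - i)

lemma good_zero : Good 0 (⊥ : Ideal (MvPolynomial (Fin n) ℂ)) (2 ^ n) := by
  refine ⟨⟨∅, by simp, by simp⟩, fun D hD => (hilb_le _ D).trans ?_⟩
  rw [Nat.sub_zero, ← mul_pow]
  exact Nat.pow_le_pow_left (by omega) _

/-- Adding a polynomial outside all minimal primes keeps the ideal good: such a polynomial is a
nonzerodivisor modulo the radical, which is the intersection of the minimal primes. -/
lemma Good.step {i : ℕ} {I : Ideal (MvPolynomial (Fin n) ℂ)} {A : ℕ} (h : Good i I A) (hi : i < n)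
    {f : MvPolynomial (Fin n) ℂ} {d : ℕ} (hd : f.totalDegree ≤ d)
    (hf : ∀ q ∈ I.minimalPrimes, f ∉ q) :
    Good (i + 1) (I ⊔ Ideal.span {f}) (A * (1 + d) ^ (n - i)) := by
  obtain ⟨e, he⟩ : ∃ e, n - i = e + 1 := ⟨n - i - 1, by omega⟩
  constructor
  · obtain ⟨s, hs, hI⟩ := h.gen
    refine ⟨insert f s, (Finset.card_insert_le _ _).trans (by omega), ?_⟩
    rw [hI, Finset.coe_insert, Ideal.span_insert, sup_comm]
  · have h2 := h.hil
    rw [he] at h2 ⊢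
    rw [show n - (i + 1) = e by omega]
    refine hilb_step (Ideal.radical_mono le_sup_left) (f := f)
      (Ideal.le_radical (Ideal.mem_sup_right (Ideal.mem_span_singleton_self f))) hd
      (fun g hg => ?_) h2
    rw [← Ideal.sInf_minimalPrimes, Ideal.mem_sInf] at hg ⊢
    intro q hq
    exact (hq.1.1.mem_or_mem (hg hq)).resolve_left (hf q hq)

/-- By Krull's height theorem a minimal prime of an ideal with `i` generators has height at most `i`. -/
lemma Good.exists_transc {i : ℕ} {I : Ideal (MvPolynomial (Fin n) ℂ)} {A : ℕ} (h : Good i I A)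
    {q : Ideal (MvPolynomial (Fin n) ℂ)} (hq : q ∈ I.minimalPrimes) :
    ∃ T : Finset (Fin n), T.card = n - i ∧ ∀ p ∈ supported ℂ (T : Set (Fin n)), p ∈ q → p = 0 := by
  obtain ⟨T, hT, hTq⟩ := _root_.exists_transc n q hq.1.1
  obtain ⟨s, hs, rfl⟩ := h.gen
  have h1 := Ideal.height_le_card_of_mem_minimalPrimes_span_finset hq
  have h2 : (n : ℕ∞) ≤ T.card + i := by
    refine hT.trans ?_
    gcongr
    exact h1.trans (by exact_mod_cast hs)
  have h3 : n ≤ T.card + i := by exact_mod_cast h2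
  obtain ⟨T', hT', hc⟩ := Finset.exists_subset_card_eq (show n - i ≤ T.card by omega)
  exact ⟨T', hc, fun p hp => hTq p (supported_mono (by exact_mod_cast hT') hp)⟩

lemma finite_minimalPrimes (I : Ideal (MvPolynomial (Fin n) ℂ)) : I.minimalPrimes.Finite :=
  Ideal.finite_minimalPrimes_of_isNoetherianRing _ I

lemma Good.card_minimalPrimes {i : ℕ} {I : Ideal (MvPolynomial (Fin n) ℂ)} {A : ℕ}
    (h : Good i I A) : I.minimalPrimes.ncard ≤ A * (n + 1) ^ n := by
  have hfin := finite_minimalPrimes I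
  have : Fintype I.minimalPrimes := hfin.fintype
  choose T hT hTq using fun q : I.minimalPrimes => h.exists_transc q.2
  have h1 := card_le_of_hilb I.radical (fun q : I.minimalPrimes => q.1) (fun q => q.2.1.1)
    (fun q => (Ideal.IsPrime.radical_le_iff q.2.1.1).2 q.2.1.2)
    (fun l m hml => Subtype.ext (le_antisymm hml (l.2.2 m.2.1 hml))) (n - i) T hT hTq h.hil
  rw [Fintype.card_eq_nat_card, Nat.card_coe_set_eq] at h1
  refine h1.trans (Nat.mul_le_mul_left _ ?_)
  exact (Nat.pow_le_pow_left (by omega) _).trans (Nat.pow_le_pow_right (by omega) (by omega))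

/-- The common zeros of `I` in `ℂ ^ n`. -/
def zeros (I : Ideal (MvPolynomial (Fin n) ℂ)) : Set (Fin n → ℂ) := {x | ∀ p ∈ I, eval x p = 0}

/-- The evaluation kernels at distinct zeros are pairwise incomparable primes; apply the counting
bound with `e = 0`. -/
lemma Good.card_zeros_le {I : Ideal (MvPolynomial (Fin n) ℂ)} {A : ℕ} (h : Good n I A)
    (S : Finset (Fin n → ℂ)) (hS : (S : Set (Fin n → ℂ)) ⊆ zeros I) : S.card ≤ A := by
  have h1 := card_le_of_hilb I.radical (fun x : S => RingHom.ker (eval (R := ℂ) x.1))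
    (fun x => RingHom.ker_isPrime _)
    (fun x => (Ideal.IsPrime.radical_le_iff (RingHom.ker_isPrime _)).2 fun p hp => hS x.2 p hp)
    (fun x y hyx => ?_) 0 (fun _ => ∅) (fun _ => rfl) (fun x p hp hpx => ?_)
    (A := A) (by have := h.hil; rwa [Nat.sub_self] at this)
  · simpa using h1
  · refine Subtype.ext (funext fun i => ?_)
    have h2 : X i - C (y.1 i) ∈ RingHom.ker (eval (R := ℂ) y.1) := by simp
    have h3 := hyx h2
    rw [RingHom.mem_ker] at h3
    simp only [map_sub, eval_X, eval_C, sub_eq_zero] at h3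
    exact h3.symm
  · rw [Finset.coe_empty, supported_empty] at hp
    obtain ⟨c, rfl⟩ := Algebra.mem_bot.1 hp
    rw [algebraMap_eq] at hpx ⊢
    rw [RingHom.mem_ker, eval_C] at hpx
    rw [hpx, C_0]

lemma Good.zeros_finite {I : Ideal (MvPolynomial (Fin n) ℂ)} {A : ℕ} (h : Good n I A) :
    (zeros I).Finite ∧ (zeros I).ncard ≤ A := by
  have hfin : (zeros I).Finite := by
    by_contra hinf
    obtain ⟨S, hS, hc⟩ := Set.Infinite.exists_subset_card_eq hinf (A + 1)
    have := h.card_zeros_le S hS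
    omega
  refine ⟨hfin, ?_⟩
  rw [Set.ncard_eq_toFinset_card _ hfin]
  exact h.card_zeros_le _ (by simp)

end Good

/-! ### Uniform probability and conditioning on one block of signs -/

section Uniform

/-- The uniform probability of an event in a finite type. -/
noncomputable def pr {α : Type*} [Fintype α] (E : Set α) : ℝ := (E.ncard : ℝ) / Fintype.card α

variable {α : Type*} [Fintype α]

lemma pr_mono {E F : Set α} (h : E ⊆ F) : pr E ≤ pr F := by
  unfold pr
  gcongr
  exact Set.toFinite F

lemma pr_nonneg (E : Set α) : 0 ≤ pr E := by unfold pr; positivity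

lemma pr_le_one (E : Set α) : pr E ≤ 1 := by
  unfold pr
  refine div_le_one_of_le₀ ?_ (by positivity)
  rw [Fintype.card_eq_nat_card]
  exact_mod_cast Set.ncard_le_card E

lemma pr_empty : pr (∅ : Set α) = 0 := by simp [pr]

lemma pr_union_le (E F : Set α) : pr (E ∪ F) ≤ pr E + pr F := by
  unfold pr
  rw [← add_div]
  gcongr
  exact_mod_cast Set.ncard_union_le E F

lemma pr_biUnion_le {β : Type*} {δ : ℝ} (S : Finset β) (E : β → Set α) (h : ∀ b ∈ S, pr (E b) ≤ δ) :
    pr (⋃ b ∈ S, E b) ≤ S.card * δ := by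
  induction S using Finset.induction_on with
  | empty => simp [pr_empty]
  | insert b S hb ih =>
    rw [Finset.set_biUnion_insert, Finset.card_insert_of_notMem hb]
    have h1 := pr_union_le (E b) (⋃ b ∈ S, E b)
    have h2 := ih fun b hb => h b (Finset.mem_insert_of_mem hb)
    have h3 := h b (Finset.mem_insert_self _ _)
    push_cast
    linarith

lemma pr_eq_sum (E : Set α) : pr E = (∑ a, if a ∈ E then (1 : ℝ) else 0) / Fintype.card α := by
  rw [pr, Set.ncard_eq_toFinset_card', Finset.sum_boole]
  congr 3
  ext a
  simp

lemma prb_eq_pr {ι V : Type*} [Fintype ι] [DecidableEq ι] [AddCommGroup V] [Module ℂ V]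
    (v : ι → V) (c : V) : prb v c = pr {ω : ι → Bool | ∑ a, sgn (ω a) • v a = c} := by
  rw [prb, pr, Set.ncard_eq_toFinset_card', Fintype.card_fun, Fintype.card_bool]
  push_cast
  congr 3
  ext a
  simp

/-- Conditioning on all blocks of signs but the `i`-th: if resampling the block `i` leads into `E`
with probability at most `δ` on `G`, and never off `G`, then `P(E) ≤ δ P(G)`. -/
lemma pr_le_of_update {ι Ω : Type*} [Fintype ι] [DecidableEq ι] [Fintype Ω] [Nonempty Ω] (i : ι)
    (E G : Set (ι → Ω)) {δ : ℝ}
    (hG : ∀ ε ∈ G, pr {ω | Function.update ε i ω ∈ E} ≤ δ)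
    (hG' : ∀ ε, ε ∉ G → ∀ ω, Function.update ε i ω ∉ E) : pr E ≤ δ * pr G := by
  have h1 : ∀ ε : ι → Ω, (∑ ω : Ω, if Function.update ε i ω ∈ E then (1 : ℝ) else 0) ≤
      δ * Fintype.card Ω * if ε ∈ G then 1 else 0 := by
    intro ε
    split_ifs with hε
    · have := hG ε hε
      rw [pr_eq_sum, div_le_iff₀ (by exact_mod_cast Fintype.card_pos)] at this
      simpa using this
    · rw [Finset.sum_eq_zero fun ω _ => if_neg (hG' ε hε ω), mul_zero]
  -- Swapping the `i`-th block with the resampled one is a measure-preserving involution.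
  let σ : (ι → Ω) × Ω → (ι → Ω) × Ω := fun p => (Function.update p.1 i p.2, p.1 i)
  have hσ : Function.Involutive σ := by
    rintro ⟨ε, ω⟩
    simp [σ]
  have h2 : ∑ ε : ι → Ω, ∑ ω : Ω, (if Function.update ε i ω ∈ E then (1 : ℝ) else 0) =
      Fintype.card Ω * ∑ ε : ι → Ω, if ε ∈ E then (1 : ℝ) else 0 := by
    rw [← Fintype.sum_prod_type']
    rw [← Equiv.sum_comp hσ.toPerm]
    rw [Fintype.sum_prod_type]
    simp only [σ, Function.Involutive.coe_toPerm, Function.update_idem, Function.update_eq_self,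
      Finset.sum_const, Finset.card_univ, nsmul_eq_mul, Finset.mul_sum]
  have h3 := Finset.sum_le_sum fun ε (_ : ε ∈ Finset.univ) => h1 ε
  rw [h2, ← Finset.mul_sum] at h3
  have hc : (0 : ℝ) < Fintype.card Ω := by exact_mod_cast Fintype.card_pos
  have h4 : (∑ ε : ι → Ω, if ε ∈ E then (1 : ℝ) else 0) ≤
      δ * ∑ ε : ι → Ω, if ε ∈ G then (1 : ℝ) else 0 := by
    refine le_of_mul_le_mul_left ?_ hc
    linarith
  rw [pr_eq_sum, pr_eq_sum, ← mul_div_assoc]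
  gcongr

/-- The case of `pr_le_of_update` where the conditional bound holds everywhere. -/
lemma pr_le_of_update' {ι Ω : Type*} [Fintype ι] [DecidableEq ι] [Fintype Ω] [Nonempty Ω] (i : ι)
    (E : Set (ι → Ω)) {δ : ℝ} (hδ : 0 ≤ δ)
    (h : ∀ ε, pr {ω | Function.update ε i ω ∈ E} ≤ δ) : pr E ≤ δ := by
  refine (pr_le_of_update i E Set.univ (fun ε _ => h ε) (by simp)).trans ?_
  exact mul_le_of_le_one_right hδ (pr_le_one _)

end Uniform

/-! ### A single random polynomial -/

section RandomPoly
open MvPolynomial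
variable {n d : ℕ}

/-- The exponent vector `J` as a finitely supported function. -/
noncomputable def expo (J : Idx n d) : Fin n →₀ ℕ :=
  Finsupp.equivFunOnFinite.symm fun j => (J.1 j : ℕ)

/-- The random polynomial `∑ ± x ^ J` with signs `ω`. -/
noncomputable def rpoly (ω : Idx n d → Bool) : MvPolynomial (Fin n) ℂ :=
  ∑ J, sgn (ω J) • monomial (expo J) 1

lemma eval_monomial_expo (x : Fin n → ℂ) (J : Idx n d) :
    eval x (monomial (expo J) 1) = ∏ j, x j ^ (J.1 j : ℕ) := by
  rw [eval_monomial, one_mul, Finsupp.prod_fintype _ _ fun i => pow_zero _]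
  rfl

lemma eval_rpoly (ε : Signs n d) (i : Fin n) (x : Fin n → ℂ) :
    eval x (rpoly (ε i)) = fSys n d ε i x := by
  rw [rpoly, fSys, map_sum]
  refine Finset.sum_congr rfl fun J _ => ?_
  rw [smul_eval, eval_monomial_expo]

lemma totalDegree_rpoly (ω : Idx n d → Bool) : (rpoly ω).totalDegree ≤ d := by
  refine (totalDegree_finsetSum _ _).trans (Finset.sup_le fun J _ => ?_)
  refine (totalDegree_smul_le _ _).trans ?_
  rw [totalDegree_monomial _ one_ne_zero, Finsupp.sum_fintype _ _ fun _ => rfl]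
  exact J.2

/-- The exponent vector of the monomial `x_t ^ a`. -/
def axis (t : Fin n) (a : Fin (d + 1)) : Idx n d :=
  ⟨fun j => if j = t then a else 0, by
    have : ∀ j, ((if j = t then a else 0 : Fin (d + 1)) : ℕ) = if j = t then (a : ℕ) else 0 := by
      intro j; split_ifs <;> rfl
    simp_rw [this]
    simp only [Finset.sum_ite_eq', Finset.mem_univ, if_true]
    omega⟩

lemma axis_injective (t : Fin n) : Function.Injective (axis (d := d) t) := by
  intro a b h
  have := congrFun (congrArg Subtype.val h) t
  simpa [axis] using this

lemma monomial_axis (t : Fin n) (a : Fin (d + 1)) :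
    monomial (expo (axis t a)) (1 : ℂ) = X t ^ (a : ℕ) := by
  rw [X_pow_eq_monomial]
  have he : expo (axis t a) = Finsupp.single t (a : ℕ) := by
    ext j
    simp only [expo, axis, Finsupp.equivFunOnFinite_symm_apply_apply, Finsupp.single_apply]
    by_cases h : j = t
    · simp [h]
    · simp [h, Ne.symm h]
  rw [he]

lemma coeff_eq_zero_of_sum_X_pow (t : Fin n) (c : Fin (d + 1) → ℂ)
    (h3 : ∑ a, c a • (X t : MvPolynomial (Fin n) ℂ) ^ (a : ℕ) = 0) (b : Fin (d + 1)) : c b = 0 := by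
  have h4 := congrArg (coeff (Finsupp.single t (b : ℕ))) h3
  rw [coeff_sum, Finset.sum_eq_single b] at h4
  · rw [X_pow_eq_monomial, coeff_smul, coeff_monomial, if_pos rfl, coeff_zero] at h4
    simpa using h4
  · intro a _ hab
    rw [X_pow_eq_monomial, coeff_smul, coeff_monomial, if_neg, smul_zero]
    intro h5
    exact hab (Fin.ext (Finsupp.single_injective t h5))
  · simp

/-- Powers of a variable that is transcendental modulo `q` satisfy no linear relation modulo `q`. -/
lemma axis_dissociated (q : Ideal (MvPolynomial (Fin n) ℂ)) (t : Fin n)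
    (h : ∀ p ∈ supported ℂ ({t} : Set (Fin n)), p ∈ q → p = 0) (η : Fin (d + 1) → ℤ)
    (hs : ∑ a, η a • Ideal.Quotient.mkₐ ℂ q (X t ^ (a : ℕ)) = 0) : η = 0 := by
  have h0 : Ideal.Quotient.mkₐ ℂ q (∑ a, (η a : ℂ) • X t ^ (a : ℕ)) = 0 := by
    rw [← hs, map_sum]
    refine Finset.sum_congr rfl fun a _ => ?_
    rw [map_smul, Int.cast_smul_eq_zsmul]
  rw [Ideal.Quotient.mkₐ_eq_mk, Ideal.Quotient.eq_zero_iff_mem] at h0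
  have hX : (X t : MvPolynomial (Fin n) ℂ) ∈ supported ℂ ({t} : Set (Fin n)) :=
    X_mem_supported.2 (Set.mem_singleton t)
  have hsum : ∑ a, (η a : ℂ) • (X t : MvPolynomial (Fin n) ℂ) ^ (a : ℕ) ∈
      supported ℂ ({t} : Set (Fin n)) :=
    sum_mem fun a _ => Subalgebra.smul_mem _ (pow_mem hX _) _
  have h3 := h _ hsum h0
  funext b
  have := coeff_eq_zero_of_sum_X_pow t _ h3 b
  simpa using this

/-- A prime (or any ideal) modulo which `X t` is transcendental rarely contains the random polynomial:
the signs of the powers of `X t` alone suffice for the bound. -/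
lemma pr_mem_prime_le (q : Ideal (MvPolynomial (Fin n) ℂ)) (t : Fin n)
    (h : ∀ p ∈ supported ℂ ({t} : Set (Fin n)), p ∈ q → p = 0) :
    pr {ω : Idx n d → Bool | rpoly ω ∈ q} ≤ (1 / 2) ^ (d + 1) := by
  have h1 : {ω : Idx n d → Bool | rpoly ω ∈ q} = {ω : Idx n d → Bool |
      ∑ J, sgn (ω J) • Ideal.Quotient.mkₐ ℂ q (monomial (expo J) 1) = 0} := by
    ext ω
    simp only [Set.mem_ofPred_eq]
    rw [← Ideal.Quotient.eq_zero_iff_mem, ← Ideal.Quotient.mkₐ_eq_mk ℂ, rpoly, map_sum]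
    simp_rw [map_smul]
  rw [h1, ← prb_eq_pr]
  refine prb_le_of_injective _ (axis t) (axis_injective t) (fun c => ?_) 0
  simp_rw [monomial_axis]
  have h2 := prb_le_of_dissociated
    (fun a : Fin (d + 1) => Ideal.Quotient.mkₐ ℂ q (X t ^ (a : ℕ)))
    (fun η _ hs => axis_dissociated q t h η hs) c
  rwa [Fintype.card_fin] at h2

/-- The probability of vanishing at `x` is controlled by the powers of any one coordinate of `x`. -/
lemma pr_eval_le {δ : ℝ} (x : Fin n → ℂ) (t : Fin n)
    (h : ∀ c, prb (fun a : Fin (d + 1) => x t ^ (a : ℕ)) c ≤ δ) :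
    pr {ω : Idx n d → Bool | eval x (rpoly ω) = 0} ≤ δ := by
  have h1 : {ω : Idx n d → Bool | eval x (rpoly ω) = 0} = {ω : Idx n d → Bool |
      ∑ J, sgn (ω J) • eval x (monomial (expo J) 1) = 0} := by
    ext ω
    simp only [Set.mem_ofPred_eq]
    rw [rpoly, map_sum]
    simp_rw [smul_eval, smul_eq_mul]
  rw [h1, ← prb_eq_pr]
  refine prb_le_of_injective _ (axis t) (axis_injective t) (fun c => ?_) 0
  simp_rw [monomial_axis, map_pow, eval_X]
  exact h c

/-- The constant term of a random polynomial is `±1`. -/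
lemma eval_zero_rpoly_ne (ω : Idx n d → Bool) (hn : 0 < n) : eval 0 (rpoly ω) ≠ 0 := by
  rw [rpoly, map_sum, Finset.sum_eq_single (axis ⟨0, hn⟩ 0)]
  · rw [monomial_axis]
    simp [sgn]
    split_ifs <;> simp
  · intro J _ hJ
    rw [smul_eval, eval_monomial_expo]
    refine mul_eq_zero_of_right _ ?_
    obtain ⟨j, hj⟩ : ∃ j, J.1 j ≠ 0 := by
      by_contra hcon
      push Not at hcon
      refine hJ (Subtype.ext (funext fun j => ?_))
      rw [hcon j]
      simp [axis]
    refine Finset.prod_eq_zero (Finset.mem_univ j) ?_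
    rw [Pi.zero_apply, zero_pow]
    exact fun h => hj (Fin.ext h)
  · simp

end RandomPoly

/-! ### The chain of ideals and the exceptional events -/

section Chain
open MvPolynomial
variable {n d : ℕ}

/-- The `i`-th random polynomial of the system, indexed by `ℕ`, with value `0` for `i ≥ n`. -/
noncomputable def gpoly (ε : Signs n d) (i : ℕ) : MvPolynomial (Fin n) ℂ :=
  if h : i < n then rpoly (ε ⟨i, h⟩) else 0

/-- The ideal generated by `X j` and the first `i` polynomials of the system. -/
noncomputable def chain (j : Fin n) (ε : Signs n d) : ℕ → Ideal (MvPolynomial (Fin n) ℂ)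
  | 0 => ⊥ ⊔ Ideal.span {X j}
  | i + 1 => chain j ε i ⊔ Ideal.span {gpoly ε i}

lemma gpoly_of_lt (ε : Signs n d) {i : ℕ} (h : i < n) : gpoly ε i = rpoly (ε ⟨i, h⟩) := dif_pos h

/-- `chain j ε i` depends only on the signs of the polynomials with index `< i`. -/
lemma chain_update (j : Fin n) (ε : Signs n d) (k : Fin n) (ω : Idx n d → Bool) (i : ℕ)
    (hi : i ≤ k) : chain j (Function.update ε k ω) i = chain j ε i := by
  induction i with
  | zero => rfl
  | succ i ih =>
    have hin : i < n := by omega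
    rw [chain, chain, ih (by omega), gpoly_of_lt _ hin, gpoly_of_lt _ hin, Function.update_of_ne]
    intro h
    rw [← h] at hi
    simp at hi

/-- The degree bound for `chain j ε i`; the exponent of `1 + d` is at most `n ^ 2` for `i < n`. -/
def bnd (n d i : ℕ) : ℕ := 2 ^ n * (1 + d) ^ (n * (i + 1))

/-- The event that the chain is good up to step `i` but the next polynomial lies in a minimal
prime. -/
def badSet (n d : ℕ) (j : Fin n) (i : ℕ) : Set (Signs n d) :=
  {ε | Good (i + 1) (chain j ε i) (bnd n d i) ∧ ∃ q ∈ (chain j ε i).minimalPrimes, gpoly ε i ∈ q}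

lemma Good.mono {i : ℕ} {I : Ideal (MvPolynomial (Fin n) ℂ)} {A B : ℕ} (h : Good i I A)
    (hAB : A ≤ B) : Good i I B :=
  ⟨h.gen, fun D hD => (h.hil D hD).trans (Nat.mul_le_mul_right _ hAB)⟩

/-- If no bad event has occurred before step `i`, the ideal at step `i` is good. -/
lemma good_chain (hd : 1 ≤ d) (j : Fin n) (ε : Signs n d) (i : ℕ) (hi : i < n)
    (hb : ∀ k < i, ε ∉ badSet n d j k) : Good (i + 1) (chain j ε i) (bnd n d i) := by
  induction i with
  | zero =>
    have h := (good_zero (n := n)).step hi (f := X j) (d := d) (by rwa [totalDegree_X]) ?_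
    · simpa [chain, bnd] using h
    · intro q hq
      have hq' : q ∈ minimalPrimes (MvPolynomial (Fin n) ℂ) := hq
      rw [IsDomain.minimalPrimes_eq_singleton_bot] at hq'
      rw [Set.mem_singleton_iff.1 hq', Ideal.mem_bot]
      exact X_ne_zero j
  | succ i ih =>
    have h := ih (by omega) fun k hk => hb k (by omega)
    have h1 := hb i (by omega)
    have h2 := h.step hi (f := gpoly ε i) (d := d)
      (by rw [gpoly_of_lt _ (by omega)]; exact totalDegree_rpoly _)
      (fun q hq hfq => h1 ⟨h, q, hq, hfq⟩)
    refine h2.mono ?_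
    rw [bnd, bnd, mul_assoc, ← pow_add]
    refine Nat.mul_le_mul_left _ (Nat.pow_le_pow_right (by omega) ?_)
    rw [mul_add n (i + 1) 1]
    omega

/-- Union bound over the minimal primes of `chain j ε i`, conditionally on the first `i` polynomials.
For `i + 1 < n` each of these primes leaves at least one variable transcendental. -/
lemma pr_badSet_le (j : Fin n) (i : ℕ) (hi : i + 1 < n) :
    pr (badSet n d j i) ≤ (bnd n d i * (n + 1) ^ n : ℕ) * (1 / 2 : ℝ) ^ (d + 1) := by
  refine pr_le_of_update' (⟨i, by omega⟩ : Fin n) _ (by positivity) fun ε => ?_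
  by_cases hG : Good (i + 1) (chain j ε i) (bnd n d i)
  · have hfin := finite_minimalPrimes (chain j ε i)
    refine (pr_mono (F := ⋃ q ∈ hfin.toFinset, {ω : Idx n d → Bool | rpoly ω ∈ q}) ?_).trans
      ((pr_biUnion_le (δ := (1 / 2) ^ (d + 1)) _ _ fun q hq => ?_).trans ?_)
    · rintro ω ⟨-, q, hq, hfq⟩
      rw [chain_update _ _ _ _ _ le_rfl] at hq
      rw [gpoly_of_lt _ (by omega), Function.update_self] at hfq
      simp only [Set.mem_iUnion]
      exact ⟨q, hfin.mem_toFinset.2 hq, hfq⟩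
    · obtain ⟨T, hT, hTq⟩ := hG.exists_transc (hfin.mem_toFinset.1 hq)
      obtain ⟨t, ht⟩ := Finset.card_pos.1 (show 0 < T.card by omega)
      refine pr_mem_prime_le q t fun p hp => hTq p (supported_mono ?_ hp)
      simpa using ht
    · gcongr
      rw [← Set.ncard_eq_toFinset_card _ hfin]
      exact hG.card_minimalPrimes
  · rw [show {ω | Function.update ε ⟨i, by omega⟩ ω ∈ badSet n d j i} = ∅ from ?_, pr_empty]
    · positivity
    · refine Set.eq_empty_of_forall_notMem fun ω hω => hG ?_
      have := hω.1
      rwa [chain_update _ _ _ _ _ le_rfl] at this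

/-- The event that the chain is good with finitely many zeros, and the next polynomial vanishes at one
of them having a nonzero coordinate outside `U`. -/
def lastSet (n d : ℕ) (j : Fin n) (i : ℕ) (U : Set ℂ) : Set (Signs n d) :=
  {ε | Good n (chain j ε i) (bnd n d i) ∧
    ∃ x ∈ zeros (chain j ε i), (∃ t, x t ∉ U ∧ x t ≠ 0) ∧ eval x (gpoly ε i) = 0}

/-- Union bound over the finitely many zeros of `chain j ε i`, conditionally on the first `i`
polynomials. -/
lemma pr_lastSet_le (j : Fin n) (i : ℕ) (hi : i < n) (U : Set ℂ) {δ : ℝ} (hδ0 : 0 ≤ δ)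
    (hδ : ∀ z : ℂ, z ∉ U → z ≠ 0 → ∀ c, prb (fun a : Fin (d + 1) => z ^ (a : ℕ)) c ≤ δ) :
    pr (lastSet n d j i U) ≤ bnd n d i * δ := by
  refine pr_le_of_update' (⟨i, hi⟩ : Fin n) _ (by positivity) fun ε => ?_
  by_cases hG : Good n (chain j ε i) (bnd n d i)
  · obtain ⟨hfin, hcard⟩ := hG.zeros_finite
    have hfin' : {x ∈ zeros (chain j ε i) | ∃ t, x t ∉ U ∧ x t ≠ 0}.Finite :=
      hfin.subset (Set.sep_subset _ _)
    refine (pr_mono (F := ⋃ x ∈ hfin'.toFinset, {ω : Idx n d → Bool | eval x (rpoly ω) = 0})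
      ?_).trans ((pr_biUnion_le (δ := δ) _ _ fun x hx => ?_).trans ?_)
    · rintro ω ⟨-, x, hx, hxt, hfx⟩
      rw [chain_update _ _ _ _ _ le_rfl] at hx
      rw [gpoly_of_lt _ hi, Function.update_self] at hfx
      simp only [Set.mem_iUnion]
      exact ⟨x, hfin'.mem_toFinset.2 ⟨hx, hxt⟩, hfx⟩
    · obtain ⟨-, t, ht, ht0⟩ := hfin'.mem_toFinset.1 hx
      exact pr_eval_le x t (hδ _ ht ht0)
    · gcongr
      rw [← Set.ncard_eq_toFinset_card _ hfin']
      exact (Set.ncard_le_ncard (Set.sep_subset _ _) hfin).trans hcard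
  · rw [show {ω | Function.update ε ⟨i, hi⟩ ω ∈ lastSet n d j i U} = ∅ from ?_, pr_empty]
    · positivity
    · refine Set.eq_empty_of_forall_notMem fun ω hω => hG ?_
      have := hω.1
      rwa [chain_update _ _ _ _ _ le_rfl] at this

/-- Two independent polynomials of the system vanish together at a nonzero point with probability
`O(1/d)`. -/
lemma pr_two_le (i k : Fin n) (hik : i ≠ k) (x : Fin n → ℂ) (hx : x ≠ 0) :
    pr {ε : Signs n d | eval x (rpoly (ε i)) = 0 ∧ eval x (rpoly (ε k)) = 0} ≤
      2 / ((d : ℝ) + 1) := by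
  obtain ⟨t, ht⟩ := Function.ne_iff.1 hx
  have hδ : ∀ c, prb (fun a : Fin (d + 1) => x t ^ (a : ℕ)) c ≤ √(2 / ((d : ℝ) + 1)) := fun c =>
    Real.le_sqrt_of_sq_le (prb_powers_sq_le_of_ne_zero ht d c)
  have h0 := pr_eval_le x t hδ
  have h1 : pr {ε : Signs n d | eval x (rpoly (ε i)) = 0} ≤ √(2 / ((d : ℝ) + 1)) := by
    refine pr_le_of_update' i _ (by positivity) fun ε => ?_
    simpa using h0
  -- Given that the `i`-th polynomial vanishes at `x`, resample the signs of the `k`-th one.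
  have h2 := pr_le_of_update k
    {ε : Signs n d | eval x (rpoly (ε i)) = 0 ∧ eval x (rpoly (ε k)) = 0}
    {ε : Signs n d | eval x (rpoly (ε i)) = 0} (δ := √(2 / ((d : ℝ) + 1)))
    (fun ε hε => (pr_mono (fun ω hω => by simpa using hω.2)).trans h0)
    (fun ε hε ω hω => hε (by simpa [Function.update_of_ne hik] using hω.1))
  refine h2.trans ((mul_le_mul_of_nonneg_left h1 (by positivity)).trans (le_of_eq ?_))
  exact Real.mul_self_sqrt (by positivity)

lemma mem_zeros_chain (j : Fin n) (ε : Signs n d) (x : Fin n → ℂ) (hx : x ∈ Zset n d ε)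
    (hj : x j = 0) (i : ℕ) : x ∈ zeros (chain j ε i) := by
  have key : ∀ i, chain j ε i ≤ RingHom.ker (eval (R := ℂ) x) := by
    intro i
    induction i with
    | zero =>
      refine sup_le bot_le ?_
      rw [Ideal.span_singleton_le_iff_mem, RingHom.mem_ker, eval_X, hj]
    | succ i ih =>
      refine sup_le ih ?_
      rw [Ideal.span_singleton_le_iff_mem, RingHom.mem_ker, gpoly]
      split_ifs with h
      · rw [eval_rpoly]
        exact hx _
      · rw [map_zero]
  exact fun p hp => key i hp

/-- A zero with `x j = 0` occurs only if some bad event occurs, or the last polynomial vanishes at a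
point with a non-exceptional coordinate, or the zero belongs to the fixed finite set `W`. -/
lemma event_subset (hd : 1 ≤ d) (hn : 2 ≤ n) (j : Fin n) (U : Set ℂ) (W : Finset (Fin n → ℂ))
    (hW : ∀ x : Fin n → ℂ, (∀ t, x t ∈ U ∨ x t = 0) → x ∈ W) :
    {ε : Signs n d | ∃ x ∈ Zset n d ε, x j = 0} ⊆
      ((⋃ i ∈ Finset.range (n - 1), badSet n d j i) ∪ lastSet n d j (n - 1) U) ∪
      ⋃ x ∈ W.erase 0, {ε : Signs n d | eval x (rpoly (ε ⟨0, by omega⟩)) = 0 ∧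
        eval x (rpoly (ε ⟨1, by omega⟩)) = 0} := by
  rintro ε ⟨x, hx, hxj⟩
  by_cases hb : ε ∈ ⋃ i ∈ Finset.range (n - 1), badSet n d j i
  · exact Or.inl (Or.inl hb)
  have hb' : ∀ k < n - 1, ε ∉ badSet n d j k := fun k hk h => hb (by
    simp only [Set.mem_iUnion]
    exact ⟨k, Finset.mem_range.2 hk, h⟩)
  have hG := good_chain hd j ε (n - 1) (by omega) hb'
  rw [Nat.sub_add_cancel (by omega)] at hG
  by_cases hU : ∃ t, x t ∉ U ∧ x t ≠ 0
  · refine Or.inl (Or.inr ⟨hG, x, mem_zeros_chain j ε x hx hxj _, hU, ?_⟩)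
    rw [gpoly_of_lt _ (by omega), eval_rpoly]
    exact hx _
  · push Not at hU
    right
    simp only [Set.mem_iUnion]
    refine ⟨x, Finset.mem_erase.2 ⟨?_, hW x fun t => ?_⟩, ?_, ?_⟩
    · rintro rfl
      exact eval_zero_rpoly_ne (ε ⟨0, by omega⟩) (by omega) ((eval_rpoly _ _ _).trans (hx _))
    · by_cases h : x t ∈ U
      · exact Or.inl h
      · exact Or.inr (hU t h)
    · exact (eval_rpoly _ _ _).trans (hx _)
    · exact (eval_rpoly _ _ _).trans (hx _)

lemma pr_event_le (hd : 1 ≤ d) (hn : 2 ≤ n) (j : Fin n) (U : Set ℂ) (W : Finset (Fin n → ℂ))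
    (hW : ∀ x : Fin n → ℂ, (∀ t, x t ∈ U ∨ x t = 0) → x ∈ W) {δ : ℝ}
    (hbad : ∀ i ∈ Finset.range (n - 1), pr (badSet n d j i) ≤ δ) :
    pr {ε : Signs n d | ∃ x ∈ Zset n d ε, x j = 0} ≤
      (n - 1 : ℕ) * δ + pr (lastSet n d j (n - 1) U) + W.card * (2 / ((d : ℝ) + 1)) := by
  have hne : (⟨0, by omega⟩ : Fin n) ≠ ⟨1, by omega⟩ := fun h => zero_ne_one (congrArg Fin.val h)
  refine (pr_mono (event_subset hd hn j U W hW)).trans ((pr_union_le _ _).trans ?_)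
  refine add_le_add ((pr_union_le _ _).trans (add_le_add_left ?_ _)) ?_
  · have h := pr_biUnion_le _ _ hbad
    rwa [Finset.card_range] at h
  · refine (pr_biUnion_le (δ := 2 / ((d : ℝ) + 1)) _ _ fun x hx =>
      pr_two_le _ _ hne x (Finset.ne_of_mem_erase hx)).trans ?_
    gcongr
    exact Finset.erase_subset _ _

end Chain

/-! ### The probability bound -/

theorem stmt5 (n : ℕ) (hn : 2 ≤ n) :
    ∃ C : ℝ, 0 < C ∧ ∀ d : ℕ, 1 ≤ d →
      Pd n d {ε : Signs n d | ∃ x ∈ Zset n d ε, ∏ j, x j = 0} ≤ C / d := by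
  obtain ⟨C₁, hC₁, hC₁'⟩ := half_pow_le (n ^ 2 + 1)
  -- The number of points is at most `2 ^ n * (1 + d) ^ n ^ 2`, so the exponent `n ^ 2 + 1` leaves a
  -- factor `1 / (d + 1)`.
  obtain ⟨C₂, hC₂, hC₂'⟩ := prb_powers_le (n ^ 2 + 1) (by omega)
  set U := exc (2 * (n ^ 2 + 1)) with hUdef
  have hUfin : (insert 0 U).Finite := (exc_finite _).insert 0
  have hWfin : (Set.pi Set.univ fun _ : Fin n => insert 0 U).Finite := Set.Finite.pi fun _ => hUfin
  set W := hWfin.toFinset with hWdef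
  have hW : ∀ x : Fin n → ℂ, (∀ t, x t ∈ U ∨ x t = 0) → x ∈ W := fun x hx =>
    hWfin.mem_toFinset.2 fun t _ => (hx t).symm
  -- The three summands come from the bad events, the last polynomial, and the exceptional points.
  set K : ℝ := (n - 1 : ℕ) * (2 ^ n * (n + 1) ^ n * C₁) + 2 ^ n * C₂ + W.card * 2 with hK
  refine ⟨n * K, by positivity, fun d hd => ?_⟩
  have hd1 : (0 : ℝ) < (d : ℝ) + 1 := by positivity
  have hbnd : ∀ i < n, (bnd n d i : ℝ) ≤ 2 ^ n * ((d : ℝ) + 1) ^ n ^ 2 := by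
    intro i hi
    rw [bnd]
    push_cast
    rw [add_comm (1 : ℝ)]
    gcongr
    · linarith
    · rw [sq]; exact Nat.mul_le_mul_left _ hi
  have hbad : ∀ j : Fin n, ∀ i ∈ Finset.range (n - 1),
      pr (badSet n d j i) ≤ 2 ^ n * (n + 1) ^ n * C₁ / ((d : ℝ) + 1) := by
    intro j i hi
    rw [Finset.mem_range] at hi
    calc _ ≤ _ := pr_badSet_le j i (by omega)
      _ ≤ (2 ^ n * ((d : ℝ) + 1) ^ n ^ 2 * (n + 1) ^ n) * (C₁ / ((d : ℝ) + 1) ^ (n ^ 2 + 1)) := by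
        push_cast
        gcongr
        · exact hbnd i (by omega)
        · exact hC₁' d
      _ = _ := by
        rw [pow_succ ((d : ℝ) + 1) (n ^ 2)]
        field_simp
  have hlast : ∀ j : Fin n, pr (lastSet n d j (n - 1) U) ≤ 2 ^ n * C₂ / ((d : ℝ) + 1) := by
    intro j
    calc _ ≤ _ := pr_lastSet_le j (n - 1) (by omega) U (δ := C₂ / ((d : ℝ) + 1) ^ (n ^ 2 + 1))
          (by positivity) (fun z hz hz0 c => hC₂' z hz0 hz d c)
      _ ≤ (2 ^ n * ((d : ℝ) + 1) ^ n ^ 2) * (C₂ / ((d : ℝ) + 1) ^ (n ^ 2 + 1)) := by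
        gcongr
        exact hbnd _ (by omega)
      _ = _ := by
        rw [pow_succ ((d : ℝ) + 1) (n ^ 2)]
        field_simp
  have hj : ∀ j : Fin n, pr {ε : Signs n d | ∃ x ∈ Zset n d ε, x j = 0} ≤ K / ((d : ℝ) + 1) := by
    intro j
    have h0 := pr_event_le hd hn j U W hW (hbad j)
    have h5 := hlast j
    have h6 : K / ((d : ℝ) + 1) = (n - 1 : ℕ) * (2 ^ n * (n + 1) ^ n * C₁ / ((d : ℝ) + 1)) +
        2 ^ n * C₂ / ((d : ℝ) + 1) + W.card * (2 / ((d : ℝ) + 1)) := by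
      rw [hK]; ring
    rw [h6]
    linarith
  calc Pd n d {ε : Signs n d | ∃ x ∈ Zset n d ε, ∏ j, x j = 0}
      = pr {ε : Signs n d | ∃ x ∈ Zset n d ε, ∏ j, x j = 0} := rfl
    _ ≤ pr (⋃ j ∈ (Finset.univ : Finset (Fin n)), {ε : Signs n d | ∃ x ∈ Zset n d ε, x j = 0}) := by
      refine pr_mono ?_
      rintro ε ⟨x, hx, hx0⟩
      obtain ⟨j, hj, hxj⟩ := Finset.prod_eq_zero_iff.1 hx0
      simp only [Set.mem_iUnion]
      exact ⟨j, hj, x, hx, hxj⟩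
    _ ≤ (Finset.univ : Finset (Fin n)).card * (K / ((d : ℝ) + 1)) :=
      pr_biUnion_le _ _ fun j _ => hj j
    _ = n * K / ((d : ℝ) + 1) := by
      rw [Finset.card_univ, Fintype.card_fin, mul_div_assoc]
    _ ≤ n * K / d := by
      have hdp : (0 : ℝ) < d := by exact_mod_cast hd
      gcongr
      linarith
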